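/- arXiv:1801.02111 — 7 statements merged into one kernel-verified Lean document; each statement's English description precedes it below -/
import Mathlib

section
/- Let R : [0,∞)×[0,∞) → ℝ satisfy condition (H1) and let (μ_t)_{t≥0} be a weakly continuous family of Borel probability measures on ℝ solving the measure-flow equation for R. Then for every z ∈ ℂ with Im z > 0 and every t ≥ 0, the Cauchy transform G_t(z) := ∫_ℝ (x − z)^{-1} μ_t(dx) satisfies G_t(z) = G_0(z) + ∫_0^t (d/ds)R(s,s) · G_s(z) · H_s(z) ds, where H_s(z) := ∫_ℝ (x − z)^{-2} μ_s(dx). -/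
open MeasureTheory

/-- Condition (H1): for every `T > 0`, `s ↦ R(s,s)` is `C¹` on `(0,∞)`, continuous at `0`, its
derivative has finitely many zeros in `(0,T]`, and there is `α > 1` such that for all
`t ∈ [0,T]` the map `s ↦ R(s,t)` is absolutely continuous on `[0,T]` (expressed via the
fundamental theorem of calculus with an integrable integrand `∂R/∂s`) with
`sup_{0≤t≤T} ∫_0^T |∂R/∂s(s,t)|^α ds < ∞`. -/
def CondH1 (R : ℝ → ℝ → ℝ) : Prop :=
  ContDiffOn ℝ 1 (fun s => R s s) (Set.Ioi 0) ∧
  ContinuousWithinAt (fun s => R s s) (Set.Ici 0) 0 ∧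
  (∀ T > (0 : ℝ), {s ∈ Set.Ioc (0 : ℝ) T | deriv (fun u => R u u) s = 0}.Finite) ∧
  (∀ T > (0 : ℝ), ∃ α > (1 : ℝ), ∃ dR : ℝ → ℝ → ℝ, ∃ C : ℝ,
    ∀ t ∈ Set.Icc (0 : ℝ) T,
      IntervalIntegrable (fun s => dR s t) volume 0 T ∧
      (∀ s ∈ Set.Icc (0 : ℝ) T, R s t = R 0 t + ∫ u in (0 : ℝ)..s, dR u t) ∧
      ∫⁻ s in Set.Ioc (0 : ℝ) T, ENNReal.ofReal (|dR s t| ^ α) ≤ ENNReal.ofReal C)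

/-- `f ∈ C_b³(ℝ)`: three times continuously differentiable with `f` and its first three
derivatives bounded. -/
def IsCb3 (f : ℝ → ℝ) : Prop :=
  ContDiff ℝ 3 f ∧ ∀ k : ℕ, k ≤ 3 → ∃ C : ℝ, ∀ x : ℝ, |iteratedDeriv k f x| ≤ C

/-- The difference quotient `(f′(x) − f′(y))/(x − y)`, interpreted as `f″(x)` on the diagonal. -/
noncomputable def diffQuot (f : ℝ → ℝ) (x y : ℝ) : ℝ :=
  if x = y then deriv (deriv f) x else (deriv f x - deriv f y) / (x - y)

/-- The measure-flow equation for `R`: for every `t ≥ 0` and every `f ∈ C_b³(ℝ)`,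
`∫ f dμ_t = ∫ f dμ_0 + (1/2)∫_0^t (d/ds)R(s,s) ∫∫ (f′(x)−f′(y))/(x−y) dμ_s dμ_s ds`. -/
def SolvesFlow (R : ℝ → ℝ → ℝ) (μ : ℝ → ProbabilityMeasure ℝ) : Prop :=
  ∀ t ≥ (0 : ℝ), ∀ f : ℝ → ℝ, IsCb3 f →
    ∫ x, f x ∂(μ t : Measure ℝ)
      = (∫ x, f x ∂(μ 0 : Measure ℝ))
        + (1 / 2) * ∫ s in (0 : ℝ)..t,
            deriv (fun u => R u u) s *
              ∫ x, ∫ y, diffQuot f x y ∂(μ s : Measure ℝ) ∂(μ s : Measure ℝ)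

lemma deriv_ofReal_comp (f : ℝ → ℝ) (s : ℝ) :
    deriv (fun u => (f u : ℂ)) s = (deriv f s : ℝ) := by
  by_cases h : DifferentiableAt ℝ f s
  · exact h.hasDerivAt.ofReal_comp.deriv
  · rw [deriv_zero_of_not_differentiableAt h, Complex.ofReal_zero]
    refine deriv_zero_of_not_differentiableAt fun hcomplex => h ?_
    exact Complex.reCLM.differentiableAt.comp s hcomplex

/-- The resolvent `(x - z)⁻¹` of a real point is bounded by `(Im z)⁻¹`. -/
lemma norm_resolvent_le {z : ℂ} (hz : 0 < z.im) (x : ℝ) : ‖((x : ℂ) - z)⁻¹‖ ≤ z.im⁻¹ := by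
  rw [norm_inv]
  refine inv_anti₀ hz ?_
  have h := Complex.abs_im_le_norm ((x : ℂ) - z)
  simp only [Complex.sub_im, Complex.ofReal_im, zero_sub, abs_neg] at h
  exact (le_abs_self _).trans h

lemma ofReal_sub_ne_zero {z : ℂ} (hz : 0 < z.im) (x : ℝ) : (x : ℂ) - z ≠ 0 := by
  intro h
  have := congrArg Complex.im h
  simp at this
  exact hz.ne' this

lemma continuous_resolvent {z : ℂ} (hz : 0 < z.im) :
    Continuous fun x : ℝ => ((x : ℂ) - z)⁻¹ :=
  (Complex.continuous_ofReal.sub continuous_const).inv₀ (ofReal_sub_ne_zero hz)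

lemma hasDerivAt_resolvent_pow {z : ℂ} (hz : 0 < z.im) (n : ℕ) (x : ℝ) :
    HasDerivAt (fun x : ℝ => ((x : ℂ) - z)⁻¹ ^ (n + 1))
      (-(n + 1) * ((x : ℂ) - z)⁻¹ ^ (n + 2)) x := by
  have h := (((hasDerivAt_id x).ofReal_comp.sub_const z).inv (ofReal_sub_ne_zero hz x)).pow (n + 1)
  refine h.congr_deriv ?_
  simp only [id, Pi.inv_apply, Nat.add_sub_cancel, Complex.ofReal_one, neg_div, one_div, ← inv_pow]
  push_cast
  ring

lemma iteratedDeriv_clm_resolvent {z : ℂ} (hz : 0 < z.im) (L : ℂ →L[ℝ] ℝ) (k : ℕ) :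
    iteratedDeriv k (fun x : ℝ => L (((x : ℂ) - z)⁻¹)) =
      fun x : ℝ => L ((-1) ^ k * (k.factorial : ℂ) * ((x : ℂ) - z)⁻¹ ^ (k + 1)) := by
  induction k with
  | zero => simp
  | succ k ih =>
    rw [iteratedDeriv_succ, ih]
    funext x
    have h := L.hasFDerivAt.comp_hasDerivAt x
      ((hasDerivAt_resolvent_pow hz k x).const_mul ((-1) ^ k * (k.factorial : ℂ)))
    refine h.deriv.trans ?_
    congr 1
    rw [Nat.factorial_succ]
    push_cast
    ring

lemma deriv_clm_resolvent {z : ℂ} (hz : 0 < z.im) (L : ℂ →L[ℝ] ℝ) :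
    deriv (fun x : ℝ => L (((x : ℂ) - z)⁻¹)) = fun x : ℝ => L (-((x : ℂ) - z)⁻¹ ^ 2) := by
  rw [← iteratedDeriv_one, iteratedDeriv_clm_resolvent hz]
  simp

lemma deriv_deriv_clm_resolvent {z : ℂ} (hz : 0 < z.im) (L : ℂ →L[ℝ] ℝ) :
    deriv (deriv fun x : ℝ => L (((x : ℂ) - z)⁻¹)) =
      fun x : ℝ => L (2 * ((x : ℂ) - z)⁻¹ ^ 3) := by
  have h : deriv (deriv fun x : ℝ => L (((x : ℂ) - z)⁻¹)) =
      iteratedDeriv 2 fun x : ℝ => L (((x : ℂ) - z)⁻¹) := by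
    rw [iteratedDeriv_succ, iteratedDeriv_one]
  rw [h, iteratedDeriv_clm_resolvent hz]
  simp

lemma isCb3_clm_resolvent {z : ℂ} (hz : 0 < z.im) (L : ℂ →L[ℝ] ℝ) :
    IsCb3 fun x : ℝ => L (((x : ℂ) - z)⁻¹) := by
  refine ⟨?_, fun k _ => ⟨‖L‖ * (k.factorial * z.im⁻¹ ^ (k + 1)), fun x => ?_⟩⟩
  · exact L.contDiff.comp
      ((Complex.ofRealCLM.contDiff.sub contDiff_const).inv (ofReal_sub_ne_zero hz))
  · rw [iteratedDeriv_clm_resolvent hz, ← Real.norm_eq_abs]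
    refine (L.le_opNorm _).trans ?_
    gcongr
    simp only [norm_mul, norm_pow, norm_neg, norm_one, one_pow, one_mul, Complex.norm_natCast]
    gcongr
    exact norm_resolvent_le hz x

lemma diffQuot_clm_resolvent {z : ℂ} (hz : 0 < z.im) (L : ℂ →L[ℝ] ℝ) (x y : ℝ) :
    diffQuot (fun x : ℝ => L (((x : ℂ) - z)⁻¹)) x y =
      L (((x : ℂ) - z)⁻¹ * (((y : ℂ) - z) ^ 2)⁻¹ + (((x : ℂ) - z) ^ 2)⁻¹ * ((y : ℂ) - z)⁻¹) := by
  have hx := ofReal_sub_ne_zero hz x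
  have hy := ofReal_sub_ne_zero hz y
  unfold diffQuot
  split_ifs with h
  · subst h
    rw [deriv_deriv_clm_resolvent hz]
    field_simp
    norm_num
  · have hxy : x - y ≠ 0 := sub_ne_zero.mpr h
    rw [deriv_clm_resolvent hz, div_eq_iff hxy, mul_comm, ← smul_eq_mul, ← map_smul, ← map_sub]
    congr 1
    rw [Complex.real_smul]
    push_cast
    field_simp
    ring

lemma integrable_resolvent {z : ℂ} (hz : 0 < z.im) (ν : Measure ℝ) [IsFiniteMeasure ν] :
    Integrable (fun x : ℝ => ((x : ℂ) - z)⁻¹) ν :=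
  Integrable.of_bound (continuous_resolvent hz).aestronglyMeasurable z.im⁻¹
    (.of_forall (norm_resolvent_le hz))

lemma norm_resolvent_sq_le {z : ℂ} (hz : 0 < z.im) (x : ℝ) :
    ‖(((x : ℂ) - z) ^ 2)⁻¹‖ ≤ z.im⁻¹ ^ 2 := by
  rw [← inv_pow, norm_pow]
  exact pow_le_pow_left₀ (norm_nonneg _) (norm_resolvent_le hz x) 2

lemma continuous_resolvent_sq {z : ℂ} (hz : 0 < z.im) :
    Continuous fun x : ℝ => (((x : ℂ) - z) ^ 2)⁻¹ := by
  simp only [← inv_pow]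
  exact (continuous_resolvent hz).pow 2

lemma integrable_resolvent_sq {z : ℂ} (hz : 0 < z.im) (ν : Measure ℝ) [IsFiniteMeasure ν] :
    Integrable (fun x : ℝ => (((x : ℂ) - z) ^ 2)⁻¹) ν :=
  Integrable.of_bound (continuous_resolvent_sq hz).aestronglyMeasurable (z.im⁻¹ ^ 2)
    (.of_forall (norm_resolvent_sq_le hz))

lemma integral_diffQuot_clm_resolvent {z : ℂ} (hz : 0 < z.im) (L : ℂ →L[ℝ] ℝ)
    (ν : Measure ℝ) [IsFiniteMeasure ν] :
    ∫ x, ∫ y, diffQuot (fun x : ℝ => L (((x : ℂ) - z)⁻¹)) x y ∂ν ∂ν =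
      2 * L ((∫ x, ((x : ℂ) - z)⁻¹ ∂ν) * ∫ x, (((x : ℂ) - z) ^ 2)⁻¹ ∂ν) := by
  have h1 := integrable_resolvent hz ν
  have h2 := integrable_resolvent_sq hz ν
  have inner (x : ℝ) : ∫ y, diffQuot (fun x : ℝ => L (((x : ℂ) - z)⁻¹)) x y ∂ν =
      L (((x : ℂ) - z)⁻¹ * (∫ y, (((y : ℂ) - z) ^ 2)⁻¹ ∂ν) +
        (((x : ℂ) - z) ^ 2)⁻¹ * ∫ y, ((y : ℂ) - z)⁻¹ ∂ν) := by
    simp only [diffQuot_clm_resolvent hz]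
    rw [L.integral_comp_comm (Integrable.fun_add (h2.const_mul _) (h1.const_mul _)),
      integral_add (h2.const_mul _) (h1.const_mul _), integral_const_mul, integral_const_mul]
  simp only [inner]
  rw [L.integral_comp_comm (Integrable.fun_add (h1.mul_const _) (h2.mul_const _)),
    integral_add (h1.mul_const _) (h2.mul_const _), integral_mul_const, integral_mul_const,
    mul_comm (∫ x, (((x : ℂ) - z) ^ 2)⁻¹ ∂ν), map_add, two_mul]

/-- Integrals of a bounded continuous function depend continuously on a weakly continuous family. -/
lemma continuousOn_integral_of_bounded {μ : ℝ → ProbabilityMeasure ℝ} {S : Set ℝ}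
    (hμ : ContinuousOn μ S) {φ : ℝ → ℂ} (hφ : Continuous φ) {C : ℝ} (hC : ∀ x, ‖φ x‖ ≤ C) :
    ContinuousOn (fun s => ∫ x, φ x ∂(μ s : Measure ℝ)) S := fun s hs =>
  (ProbabilityMeasure.tendsto_iff_forall_integral_rclike_tendsto ℂ).mp (hμ s hs)
    (BoundedContinuousFunction.ofNormedAddCommGroup φ hφ C hC)

lemma intervalIntegrable_deriv_diag {R : ℝ → ℝ → ℝ} (hR : CondH1 R) {t : ℝ} (ht : 0 ≤ t) :
    IntervalIntegrable (deriv fun u => R u u) volume 0 t := by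
  obtain ⟨hC1, hC0, hfin, -⟩ := hR
  set g : ℝ → ℝ := fun u => R u u
  have hd : ContinuousOn (deriv g) (Set.Ioi 0) :=
    hC1.continuousOn_deriv_of_isOpen isOpen_Ioi le_rfl
  have hdiff (s : ℝ) (hs : 0 < s) : HasDerivAt g (deriv g s) s :=
    ((hC1.differentiableOn one_ne_zero).differentiableAt (Ioi_mem_nhds hs)).hasDerivAt
  have hg : ContinuousOn g (Set.Ici 0) := fun s hs => by
    rcases (Set.mem_Ici.mp hs).eq_or_lt with rfl | h
    · exact hC0
    · exact (hdiff s h).continuousAt.continuousWithinAt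
  -- there are no zeros of the derivative in some interval `(0, ε)`
  obtain ⟨ε, hε, hball⟩ := Metric.mem_nhds_iff.mp
    ((hfin 1 one_pos).isClosed.isOpen_compl.mem_nhds (x := 0) (by simp))
  obtain ⟨δ, hδ, hδε⟩ := exists_between (lt_min hε one_pos)
  have hne (s : ℝ) (hs : s ∈ Set.Ioo 0 δ) : deriv g s ≠ 0 := fun h0 => by
    refine hball (a := s) ?_ ⟨⟨hs.1, ?_⟩, h0⟩
    · rw [Metric.mem_ball, Real.dist_0_eq_abs, abs_of_pos hs.1]
      exact hs.2.trans (hδε.trans_le (min_le_left _ _))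
    · exact (hs.2.trans (hδε.trans_le (min_le_right _ _))).le
  have hsub : Set.Ioo 0 δ ⊆ Set.Ioi (0 : ℝ) := fun s hs => hs.1
  have hsign : (∀ s ∈ Set.Ioo 0 δ, 0 ≤ deriv g s) ∨ ∀ s ∈ Set.Ioo 0 δ, deriv g s ≤ 0 := by
    by_contra! h
    obtain ⟨⟨a, ha, ha'⟩, b, hb, hb'⟩ := h
    obtain ⟨c, hc, hc'⟩ := isPreconnected_Ioo.intermediate_value ha hb (hd.mono hsub)
      ⟨ha'.le, hb'.le⟩
    exact hne c hc hc'
  have hnear : IntervalIntegrable (deriv g) volume 0 δ := by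
    rw [intervalIntegrable_iff_integrableOn_Ioc_of_le hδ.le]
    have hgδ : ContinuousOn g (Set.Icc 0 δ) := hg.mono fun s hs => hs.1
    rcases hsign with h | h
    · exact intervalIntegral.integrableOn_deriv_of_nonneg hgδ (fun s hs => hdiff s hs.1) h
    · have := intervalIntegral.integrableOn_deriv_of_nonneg hgδ.neg
        (fun s hs => (hdiff s hs.1).neg) fun s hs => neg_nonneg.mpr (h s hs)
      simpa using this.neg
  rcases ht.eq_or_lt with rfl | ht'
  · exact IntervalIntegrable.refl
  · refine hnear.trans (ContinuousOn.intervalIntegrable (hd.mono fun s hs => ?_))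
    exact (lt_min hδ ht').trans_le hs.1

/-- **Evolution of the Cauchy transform.** If `(μ_t)` is a weakly continuous solution of the
measure-flow equation for `R` (satisfying (H1)), then for every `z` in the upper half-plane and
`t ≥ 0`, `G_t(z) = G_0(z) + ∫_0^t (d/ds)R(s,s)·G_s(z)·H_s(z) ds`, where
`G_s(z) = ∫ (x−z)⁻¹ dμ_s` and `H_s(z) = ∫ (x−z)⁻² dμ_s`. -/
theorem cauchy_transform_evolution
    (R : ℝ → ℝ → ℝ) (hR : CondH1 R)
    (μ : ℝ → ProbabilityMeasure ℝ)
    (hμc : ContinuousOn μ (Set.Ici 0))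
    (hμ : SolvesFlow R μ) :
    ∀ z : ℂ, 0 < z.im → ∀ t ≥ (0 : ℝ),
      ∫ x, ((x : ℂ) - z)⁻¹ ∂(μ t : Measure ℝ)
        = (∫ x, ((x : ℂ) - z)⁻¹ ∂(μ 0 : Measure ℝ))
          + ∫ s in (0 : ℝ)..t,
              (deriv (fun u => R u u) s : ℂ) *
                ((∫ x, ((x : ℂ) - z)⁻¹ ∂(μ s : Measure ℝ)) *
                  ∫ x, (((x : ℂ) - z) ^ 2)⁻¹ ∂(μ s : Measure ℝ)) := by
  intro z hz t ht
  simp only [deriv_ofReal_comp]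
  have hint : IntervalIntegrable (fun s => ((deriv (fun u => R u u) s : ℝ) : ℂ) *
      ((∫ x, ((x : ℂ) - z)⁻¹ ∂(μ s : Measure ℝ)) *
        ∫ x, (((x : ℂ) - z) ^ 2)⁻¹ ∂(μ s : Measure ℝ))) volume 0 t := by
    have hd : IntervalIntegrable (fun s => ((deriv (fun u => R u u) s : ℝ) : ℂ)) volume 0 t :=
      (intervalIntegrable_deriv_diag hR ht).imp (·.ofReal) (·.ofReal)
    refine hd.mul_continuousOn (ContinuousOn.mono ?_
      (?_ : Set.uIcc 0 t ⊆ Set.Ici 0))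
    · exact (continuousOn_integral_of_bounded hμc (continuous_resolvent hz)
        (norm_resolvent_le hz)).mul (continuousOn_integral_of_bounded hμc
          (continuous_resolvent_sq hz) (norm_resolvent_sq_le hz))
    · rw [Set.uIcc_of_le ht]
      exact fun s hs => hs.1
  have key (L : ℂ →L[ℝ] ℝ) : L (∫ x, ((x : ℂ) - z)⁻¹ ∂(μ t : Measure ℝ)) =
      L ((∫ x, ((x : ℂ) - z)⁻¹ ∂(μ 0 : Measure ℝ)) + ∫ s in (0 : ℝ)..t,
        ((deriv (fun u => R u u) s : ℝ) : ℂ) * ((∫ x, ((x : ℂ) - z)⁻¹ ∂(μ s : Measure ℝ)) *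
          ∫ x, (((x : ℂ) - z) ^ 2)⁻¹ ∂(μ s : Measure ℝ))) := by
    have h := hμ t ht _ (isCb3_clm_resolvent hz L)
    rw [L.integral_comp_comm (integrable_resolvent hz _),
      L.integral_comp_comm (integrable_resolvent hz _)] at h
    rw [h, map_add, ← L.intervalIntegral_comp_comm hint, ← intervalIntegral.integral_const_mul]
    congr 1
    refine intervalIntegral.integral_congr fun s _ => ?_
    simp only [integral_diffQuot_clm_resolvent hz, ← Complex.real_smul, map_smul, smul_eq_mul]
    ring
  exact Complex.ext (key Complex.reCLM) (key Complex.imCLM)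
end

section
/- Let R : [0,∞)×[0,∞) → ℝ satisfy condition (H1) with R(0,0) = 0, and let (μ_t)_{t≥0} be a weakly continuous family of Borel probability measures on ℝ solving the measure-flow equation for R with initial value μ_0 = δ_0 (the Dirac mass at 0). Then for every t ≥ 0 with R(t,t) > 0, the measure μ_t is the semicircle distribution with variance R(t,t). -/
open MeasureTheory

/-- The semicircle distribution with variance `v`: the measure on `ℝ` with density
`x ↦ (2πv)⁻¹ √(4v − x²)` (supported on `[−2√v, 2√v]`). -/
noncomputable def semicircle (v : ℝ) : Measure ℝ :=
  volume.withDensity fun x => ENNReal.ofReal ((2 * Real.pi * v)⁻¹ * Real.sqrt (4 * v - x ^ 2))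


open Set Filter Topology
open scoped Nat

namespace SemicircleFlow

/-- `∫₀¹ aᵐ (1 - a)ⁿ da = m! n! / (m + n + 1)!`. -/
lemma integral_pow_mul_one_sub_pow (m n : ℕ) :
    ∫ a in (0 : ℝ)..1, a ^ m * (1 - a) ^ n = (m ! * n ! : ℝ) / (m + n + 1)! := by
  induction n generalizing m with
  | zero =>
    simp only [pow_zero, mul_one, integral_pow, Nat.factorial_zero, Nat.add_zero,
      Nat.factorial_succ]
    have := Nat.factorial_ne_zero m
    push_cast
    field_simp
    simp
  | succ n ih =>
    have hderiv : ∀ x ∈ uIcc (0 : ℝ) 1, HasDerivAt (fun a : ℝ => a ^ (m + 1) * (1 - a) ^ (n + 1))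
        ((m + 1) * (x ^ m * (1 - x) ^ (n + 1)) - (n + 1) * (x ^ (m + 1) * (1 - x) ^ n)) x := by
      intro x _
      have h1 := hasDerivAt_pow (m + 1) x
      have h2 := ((hasDerivAt_id' x).const_sub 1).fun_pow (n + 1)
      refine (h1.fun_mul h2).congr_deriv ?_
      push_cast
      ring
    have key := intervalIntegral.integral_eq_sub_of_hasDerivAt hderiv
      (Continuous.intervalIntegrable (by fun_prop) _ _)
    rw [intervalIntegral.integral_sub (Continuous.intervalIntegrable (by fun_prop) _ _)
      (Continuous.intervalIntegrable (by fun_prop) _ _), intervalIntegral.integral_const_mul,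
      intervalIntegral.integral_const_mul, ih (m + 1)] at key
    have hm : (0 : ℝ) < m + 1 := by positivity
    have hidx : m + 1 + n + 1 = m + (n + 1) + 1 := by ring
    rw [hidx] at key
    have hf := Nat.factorial_ne_zero (m + (n + 1) + 1)
    simp only [Nat.factorial_succ m, Nat.factorial_succ n] at key ⊢
    push_cast at key ⊢
    simp at key
    apply mul_left_cancel₀ hm.ne'
    rw [sub_eq_zero.mp key]
    ring

/-- The coefficients of the power series in `v u²` of the characteristic function at `u` of the
semicircle distribution with variance `v`. -/
noncomputable def charCoeff (k : ℕ) : ℝ := (-1) ^ k * catalan k / (2 * k)!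

/-- The entire function `F` such that `u ↦ F (v u²)` is the characteristic function of the
semicircle distribution with variance `v`. -/
noncomputable def charSeries (w : ℝ) : ℝ := ∑' k, charCoeff k * w ^ k

lemma abs_charCoeff_le (k : ℕ) : |charCoeff k| ≤ 4 ^ k / (2 * k)! := by
  have h1 : catalan k ≤ 4 ^ k := by
    rw [catalan_eq_centralBinom_div]
    exact (Nat.div_le_self _ _).trans (Nat.centralBinom_le_four_pow k)
  have h2 : (catalan k : ℝ) ≤ 4 ^ k := by exact_mod_cast h1
  rw [charCoeff, abs_div, abs_mul, abs_pow, abs_neg, abs_one, one_pow, one_mul, Nat.abs_cast,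
    Nat.abs_cast]
  gcongr

lemma mul_factorial_le_factorial_two_mul (k : ℕ) : k * k ! ≤ (2 * k)! := by
  rcases k with _ | k
  · simp
  · calc (k + 1) * (k + 1)! ≤ (2 * k + 2) * (2 * k + 1)! := by
          gcongr <;> omega
      _ = (2 * (k + 1))! := rfl

lemma summable_abs_charCoeff_mul_pow (w : ℝ) : Summable fun k => |charCoeff k * w ^ k| := by
  refine Summable.of_nonneg_of_le (fun _ => abs_nonneg _) (fun k => ?_)
    (Real.summable_pow_div_factorial (4 * |w|))
  rw [abs_mul, abs_pow, mul_pow, mul_div_right_comm]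
  refine mul_le_mul_of_nonneg_right ((abs_charCoeff_le k).trans ?_) (by positivity)
  gcongr
  omega

lemma hasSum_charSeries (w : ℝ) : HasSum (fun k => charCoeff k * w ^ k) (charSeries w) :=
  (summable_abs_charCoeff_mul_pow w).of_abs.hasSum

@[simp] lemma charSeries_zero : charSeries 0 = 1 := by
  rw [charSeries, tsum_eq_single 0 (fun k hk => by simp [hk])]
  simp [charCoeff]

lemma hasDerivAt_charSeries_tsum (w : ℝ) :
    HasDerivAt charSeries (∑' k : ℕ, charCoeff k * (k * w ^ (k - 1))) w := by
  set r := |w| + 1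
  have hr : 1 ≤ r := by simp [r]
  refine hasDerivAt_tsum_of_isPreconnected (t := Metric.ball 0 r) (y₀ := 0)
    (g := fun k z => charCoeff k * z ^ k) (g' := fun k z => charCoeff k * (k * z ^ (k - 1)))
    (Real.summable_pow_div_factorial (4 * r)) Metric.isOpen_ball
    (convex_ball _ _).isPreconnected (fun k y _ => ?_) (fun k y hy => ?_) (by simp; linarith)
    (hasSum_charSeries 0).summable (by simp [r])
  · exact (hasDerivAt_pow k y).const_mul _
  · have hy' : |y| ≤ r := by simpa using (mem_ball_zero_iff.mp hy).le
    have hf : (k : ℝ) / (2 * k)! ≤ 1 / k ! := by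
      rw [div_le_div_iff₀ (by positivity) (by positivity), one_mul]
      exact_mod_cast mul_factorial_le_factorial_two_mul k
    calc ‖charCoeff k * (k * y ^ (k - 1))‖ = |charCoeff k| * (k * |y| ^ (k - 1)) := by
          simp
      _ ≤ 4 ^ k / (2 * k)! * (k * r ^ k) := by
          gcongr
          · exact abs_charCoeff_le k
          · exact (pow_le_pow_left₀ (abs_nonneg _) hy' _).trans
              (pow_le_pow_right₀ hr (Nat.sub_le _ _))
      _ = (4 * r) ^ k * (k / (2 * k)!) := by rw [mul_pow]; ring
      _ ≤ (4 * r) ^ k * (1 / k !) := by gcongr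
      _ = (4 * r) ^ k / k ! := by ring

lemma continuous_charSeries : Continuous charSeries :=
  continuous_iff_continuousAt.mpr fun w => (hasDerivAt_charSeries_tsum w).continuousAt

lemma integral_antidiagonal_charCoeff (w : ℝ) (n : ℕ) :
    ∫ a in (0 : ℝ)..1, ∑ p ∈ Finset.HasAntidiagonal.antidiagonal n,
      (charCoeff p.1 * (w * a ^ 2) ^ p.1) * (charCoeff p.2 * (w * (1 - a) ^ 2) ^ p.2) =
    -2 * (charCoeff (n + 1) * ((n + 1 : ℕ) * w ^ n)) := by
  rw [intervalIntegral.integral_finsetSum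
    (fun p _ => Continuous.intervalIntegrable (by fun_prop) _ _)]
  have hterm : ∀ p ∈ Finset.HasAntidiagonal.antidiagonal n, ∫ a in (0 : ℝ)..1,
      (charCoeff p.1 * (w * a ^ 2) ^ p.1) * (charCoeff p.2 * (w * (1 - a) ^ 2) ^ p.2) =
      (-1) ^ n * w ^ n / (2 * n + 1)! * ((catalan p.1 * catalan p.2 : ℕ) : ℝ) := by
    rintro ⟨i, j⟩ hp
    obtain rfl : i + j = n := by simpa using hp
    have : ∀ a : ℝ, (charCoeff i * (w * a ^ 2) ^ i) * (charCoeff j * (w * (1 - a) ^ 2) ^ j) =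
        charCoeff i * charCoeff j * w ^ (i + j) * (a ^ (2 * i) * (1 - a) ^ (2 * j)) := by
      intro a
      rw [pow_mul, pow_mul, mul_pow, mul_pow, pow_add]
      ring
    simp only [this]
    rw [intervalIntegral.integral_const_mul, integral_pow_mul_one_sub_pow, charCoeff, charCoeff,
      ← mul_add]
    have h1 := Nat.factorial_ne_zero (2 * i)
    have h2 := Nat.factorial_ne_zero (2 * j)
    push_cast
    field_simp
    ring
  rw [Finset.sum_congr rfl hterm, ← Finset.mul_sum, ← Nat.cast_sum, ← catalan_succ', charCoeff,
    show 2 * (n + 1) = 2 * n + 1 + 1 by ring, Nat.factorial_succ (2 * n + 1)]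
  have h1 := Nat.factorial_ne_zero (2 * n + 1)
  push_cast
  field_simp
  ring

/-- Termwise integration of the Cauchy product of `charSeries (w a²)` and
`charSeries (w (1 - a)²)`. -/
lemma hasSum_integral_charSeries_mul (w : ℝ) :
    HasSum (fun n : ℕ => -2 * (charCoeff (n + 1) * ((n + 1 : ℕ) * w ^ n)))
      (∫ a in (0 : ℝ)..1, charSeries (w * a ^ 2) * charSeries (w * (1 - a) ^ 2)) := by
  have hsum : Summable fun k => ‖|charCoeff k * w ^ k|‖ := by
    simpa only [Real.norm_eq_abs, abs_abs] using summable_abs_charCoeff_mul_pow w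
  have hbound := (summable_norm_sum_mul_antidiagonal_of_summable_norm hsum hsum).of_norm
  have hpow : ∀ (b : ℝ) (k : ℕ), 0 ≤ b → b ≤ 1 →
      |charCoeff k * (w * b ^ 2) ^ k| ≤ |charCoeff k * w ^ k| := by
    intro b k hb0 hb1
    rw [mul_pow, ← mul_assoc, abs_mul _ ((b ^ 2) ^ k), ← pow_mul,
      abs_of_nonneg (by positivity : 0 ≤ b ^ (2 * k))]
    exact mul_le_of_le_one_right (abs_nonneg _) (pow_le_one₀ hb0 hb1)
  simp only [← integral_antidiagonal_charCoeff]
  refine intervalIntegral.hasSum_integral_of_dominated_convergence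
    (fun n _ => ∑ p ∈ Finset.HasAntidiagonal.antidiagonal n,
      |charCoeff p.1 * w ^ p.1| * |charCoeff p.2 * w ^ p.2|)
    (fun n => Continuous.aestronglyMeasurable (by fun_prop))
    (fun n => Eventually.of_forall fun a ha => ?_) (Eventually.of_forall fun _ _ => hbound)
    intervalIntegrable_const (Eventually.of_forall fun a _ => ?_)
  · rw [uIoc_of_le zero_le_one] at ha
    refine norm_sum_le_of_le _ fun p _ => ?_
    rw [norm_mul]
    exact mul_le_mul (hpow a p.1 ha.1.le ha.2)
      (hpow (1 - a) p.2 (by linarith [ha.2]) (by linarith [ha.1])) (abs_nonneg _) (abs_nonneg _)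
  · have h1 : Summable fun k => ‖charCoeff k * (w * a ^ 2) ^ k‖ :=
      summable_abs_charCoeff_mul_pow _
    have h2 : Summable fun k => ‖charCoeff k * (w * (1 - a) ^ 2) ^ k‖ :=
      summable_abs_charCoeff_mul_pow _
    rw [charSeries, charSeries,
      tsum_mul_tsum_eq_tsum_sum_antidiagonal_of_summable_norm h1 h2]
    exact (summable_norm_sum_mul_antidiagonal_of_summable_norm h1 h2).of_norm.hasSum

lemma hasDerivAt_charSeries (w : ℝ) :
    HasDerivAt charSeries
      (-(1 / 2) * ∫ a in (0 : ℝ)..1, charSeries (w * a ^ 2) * charSeries (w * (1 - a) ^ 2)) w := by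
  have key := (hasSum_integral_charSeries_mul w).mul_left (-(1 / 2))
  simp only [← mul_assoc (-(1 / 2 : ℝ)) (-2), show (-(1 / 2) * -2 : ℝ) = 1 by norm_num,
    one_mul] at key
  have hs := (summable_nat_add_iff (f := fun k : ℕ => charCoeff k * (k * w ^ (k - 1))) 1).mp
    key.summable
  have hd := hasDerivAt_charSeries_tsum w
  rw [hs.tsum_eq_zero_add] at hd
  rw [← key.tsum_eq]
  simpa using hd

/-- The bilinear average `∫₀¹ Φ(a u) Φ((1 - a) u) da` driving the flow of characteristic
functions. -/
noncomputable def selfAverage (Φ : ℝ → ℂ) (u : ℝ) : ℂ :=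
  ∫ a in (0 : ℝ)..1, Φ (a * u) * Φ ((1 - a) * u)

/-- `Φ` is a solution on `[0, T] × [-U, U]`, bounded by `M`, of the integral equation satisfied by
the characteristic functions of a measure flow with speed `h`. -/
structure IsCharFlow (h : ℝ → ℝ) (T U M : ℝ) (Φ : ℝ → ℝ → ℂ) : Prop where
  continuous_right : ∀ s ∈ Icc 0 T, Continuous (Φ s)
  continuousOn_left : ∀ u, ContinuousOn (fun s => Φ s u) (Icc 0 T)
  norm_le : ∀ s ∈ Icc 0 T, ∀ u ∈ Icc (-U) U, ‖Φ s u‖ ≤ M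
  eq_integral : ∀ t ∈ Icc 0 T, ∀ u ∈ Icc (-U) U,
    Φ t u = 1 - (u ^ 2 / 2 : ℝ) * ∫ s in (0 : ℝ)..t, (h s : ℂ) * selfAverage (Φ s) u

lemma mul_mem_Icc_neg {a u U : ℝ} (ha : a ∈ Icc (0 : ℝ) 1) (hu : u ∈ Icc (-U) U) :
    a * u ∈ Icc (-U) U := by
  rw [mem_Icc, ← abs_le] at hu
  rw [mem_Icc, ← abs_le, abs_mul, abs_of_nonneg ha.1]
  exact (mul_le_of_le_one_left (abs_nonneg _) ha.2).trans hu

lemma one_sub_mem_Icc {a : ℝ} (ha : a ∈ Icc (0 : ℝ) 1) : 1 - a ∈ Icc (0 : ℝ) 1 :=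
  ⟨by linarith [ha.2], by linarith [ha.1]⟩

lemma continuousOn_selfAverage {Φ : ℝ → ℝ → ℂ} {T U M : ℝ}
    (hr : ∀ s ∈ Icc 0 T, Continuous (Φ s))
    (hl : ∀ u, ContinuousOn (fun s => Φ s u) (Icc 0 T))
    (hM : ∀ s ∈ Icc 0 T, ∀ u ∈ Icc (-U) U, ‖Φ s u‖ ≤ M) {u : ℝ} (hu : u ∈ Icc (-U) U) :
    ContinuousOn (fun s => selfAverage (Φ s) u) (Icc 0 T) := by
  intro s hs
  refine intervalIntegral.continuousWithinAt_of_dominated_interval (bound := fun _ => M * M) ?_ ?_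
    intervalIntegrable_const ?_
  · filter_upwards [self_mem_nhdsWithin] with x hx
    have := hr x hx
    exact Continuous.aestronglyMeasurable (by fun_prop)
  · filter_upwards [self_mem_nhdsWithin] with x hx
    refine Eventually.of_forall fun a ha => ?_
    rw [uIoc_of_le zero_le_one] at ha
    have ha' : a ∈ Icc (0 : ℝ) 1 := Ioc_subset_Icc_self ha
    have h1 := hM x hx _ (mul_mem_Icc_neg ha' hu)
    have h2 := hM x hx _ (mul_mem_Icc_neg (one_sub_mem_Icc ha') hu)
    rw [norm_mul]
    exact mul_le_mul h1 h2 (norm_nonneg _) ((norm_nonneg _).trans h1)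
  · exact Eventually.of_forall fun a _ => ((hl _) s hs).mul ((hl _) s hs)

lemma norm_selfAverage_sub_le {Φ Ψ : ℝ → ℂ} {U M δ u : ℝ} (hΦc : Continuous Φ)
    (hΨc : Continuous Ψ) (hΦ : ∀ u ∈ Icc (-U) U, ‖Φ u‖ ≤ M) (hΨ : ∀ u ∈ Icc (-U) U, ‖Ψ u‖ ≤ M)
    (hδ : ∀ u ∈ Icc (-U) U, ‖Φ u - Ψ u‖ ≤ δ) (hu : u ∈ Icc (-U) U) :
    ‖selfAverage Φ u - selfAverage Ψ u‖ ≤ 2 * M * δ := by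
  rw [selfAverage, selfAverage, ← intervalIntegral.integral_sub
    (Continuous.intervalIntegrable (by fun_prop) _ _)
    (Continuous.intervalIntegrable (by fun_prop) _ _)]
  refine (intervalIntegral.norm_integral_le_of_norm_le_const (C := 2 * M * δ)
    fun a ha => ?_).trans (by simp)
  rw [uIoc_of_le zero_le_one] at ha
  have ha' : a ∈ Icc (0 : ℝ) 1 := Ioc_subset_Icc_self ha
  have h1 := mul_mem_Icc_neg ha' hu
  have h2 := mul_mem_Icc_neg (one_sub_mem_Icc ha') hu
  have hM : 0 ≤ M := (norm_nonneg _).trans (hΦ _ h1)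
  calc ‖Φ (a * u) * Φ ((1 - a) * u) - Ψ (a * u) * Ψ ((1 - a) * u)‖
      = ‖Φ (a * u) * (Φ ((1 - a) * u) - Ψ ((1 - a) * u))
          + (Φ (a * u) - Ψ (a * u)) * Ψ ((1 - a) * u)‖ := by ring_nf
    _ ≤ M * δ + δ * M := by
      refine (norm_add_le _ _).trans (add_le_add ?_ ?_)
      · rw [norm_mul]
        exact mul_le_mul (hΦ _ h1) (hδ _ h2) (norm_nonneg _) hM
      · rw [norm_mul]
        exact mul_le_mul (hδ _ h1) (hΨ _ h2) (norm_nonneg _) ((norm_nonneg _).trans (hδ _ h1))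
    _ = 2 * M * δ := by ring

lemma continuousOn_integral_abs {h : ℝ → ℝ} {T : ℝ} (hint : IntervalIntegrable h volume 0 T)
    (hT : 0 ≤ T) : ContinuousOn (fun t => ∫ r in (0 : ℝ)..t, |h r|) (Icc 0 T) := by
  rw [← uIcc_of_le hT]
  apply intervalIntegral.continuousOn_primitive_interval
  rw [uIcc_of_le hT]
  exact (intervalIntegrable_iff_integrableOn_Icc_of_le hT).mp hint.abs

/-- `∫₀ᵗ |h| Aⁿ = Aⁿ⁺¹(t) / (n + 1)` for `A(t) = ∫₀ᵗ |h|`. -/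
lemma integral_abs_mul_pow_integral_abs {h : ℝ → ℝ} {t : ℝ} (ht : 0 ≤ t)
    (hint : IntervalIntegrable h volume 0 t) (hcont : ContinuousOn h (Ioi 0)) (n : ℕ) :
    ∫ s in (0 : ℝ)..t, |h s| * (∫ r in (0 : ℝ)..s, |h r|) ^ n =
      (∫ r in (0 : ℝ)..t, |h r|) ^ (n + 1) / (n + 1) := by
  have hA := continuousOn_integral_abs hint ht
  have hn : (n + 1 : ℝ) ≠ 0 := by positivity
  rw [intervalIntegral.integral_eq_sub_of_hasDerivAt_of_le
    (f := fun s => (∫ r in (0 : ℝ)..s, |h r|) ^ (n + 1) / (n + 1)) ht]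
  · simp
  · exact (hA.pow _).div_const _
  · intro s hs
    have hs' : s ∈ uIcc 0 t := by rw [uIcc_of_le ht]; exact Ioo_subset_Icc_self hs
    have hd := intervalIntegral.integral_hasDerivAt_right
      ((hint.mono_set (uIcc_subset_uIcc_left hs')).abs)
      (hcont.abs.stronglyMeasurableAtFilter isOpen_Ioi s hs.1)
      (hcont.abs.continuousAt (Ioi_mem_nhds hs.1))
    refine ((hd.fun_pow (n + 1)).div_const (n + 1 : ℝ)).congr_deriv ?_
    push_cast
    field_simp
  · refine hint.abs.mul_continuousOn ?_
    rw [uIcc_of_le ht]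
    exact hA.pow n

lemma IsCharFlow.norm_sub_le {h : ℝ → ℝ} {T U M : ℝ} {Φ Ψ : ℝ → ℝ → ℂ}
    (hint : IntervalIntegrable h volume 0 T) (hcont : ContinuousOn h (Ioi 0))
    (hΦ : IsCharFlow h T U M Φ) (hΨ : IsCharFlow h T U M Ψ) (n : ℕ) :
    ∀ t ∈ Icc 0 T, ∀ u ∈ Icc (-U) U,
      ‖Φ t u - Ψ t u‖ ≤ 2 * M * ((U ^ 2 * M * ∫ r in (0 : ℝ)..t, |h r|) ^ n / n !) := by
  induction n with
  | zero =>
    intro t ht u hu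
    have h1 := hΦ.norm_le t ht u hu
    have h2 := hΨ.norm_le t ht u hu
    simpa using (_root_.norm_sub_le _ _).trans (by linarith)
  | succ n ih =>
    intro t ht u hu
    have hsub : Icc 0 t ⊆ Icc 0 T := Icc_subset_Icc_right ht.2
    have hint' : IntervalIntegrable h volume 0 t :=
      hint.mono_set (uIcc_subset_uIcc_left (by rw [uIcc_of_le (ht.1.trans ht.2)]; exact ht))
    have hint_c : IntervalIntegrable (fun s => (h s : ℂ)) volume 0 t := ⟨hint'.1.ofReal, hint'.2.ofReal⟩
    have key : ∀ {χ : ℝ → ℝ → ℂ}, IsCharFlow h T U M χ →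
        IntervalIntegrable (fun s => (h s : ℂ) * selfAverage (χ s) u) volume 0 t := by
      intro χ hχ
      refine hint_c.mul_continuousOn ?_
      rw [uIcc_of_le ht.1]
      exact (continuousOn_selfAverage hχ.continuous_right hχ.continuousOn_left hχ.norm_le hu).mono
        hsub
    have hA := continuousOn_integral_abs hint' ht.1
    have hU : u ^ 2 ≤ U ^ 2 := sq_le_sq' hu.1 hu.2
    have hbound : ‖∫ s in (0 : ℝ)..t, ((h s : ℂ) * selfAverage (Φ s) u
        - (h s : ℂ) * selfAverage (Ψ s) u)‖ ≤ ∫ s in (0 : ℝ)..t,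
        (2 * M * (2 * M * ((U ^ 2 * M) ^ n / n !))) *
          (|h s| * (∫ r in (0 : ℝ)..s, |h r|) ^ n) := by
      refine intervalIntegral.norm_integral_le_of_norm_le ht.1 (Eventually.of_forall
        fun s hs => ?_) ?_
      · have hs' : s ∈ Icc 0 T := hsub (Ioc_subset_Icc_self hs)
        rw [← mul_sub, norm_mul, Complex.norm_real, Real.norm_eq_abs]
        have := norm_selfAverage_sub_le (hΦ.continuous_right s hs') (hΨ.continuous_right s hs')
          (hΦ.norm_le s hs') (hΨ.norm_le s hs') (ih s hs') hu
        refine (mul_le_mul_of_nonneg_left this (abs_nonneg _)).trans (le_of_eq ?_)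
        rw [mul_pow _ (∫ r in (0 : ℝ)..s, |h r|)]
        ring
      · refine (hint'.abs.mul_continuousOn ?_).const_mul _
        rw [uIcc_of_le ht.1]
        exact hA.pow n
    rw [intervalIntegral.integral_const_mul, integral_abs_mul_pow_integral_abs ht.1 hint' hcont,
      intervalIntegral.integral_sub (key hΦ) (key hΨ)] at hbound
    rw [hΦ.eq_integral t ht u hu, hΨ.eq_integral t ht u hu, sub_sub_sub_cancel_left, ← mul_sub,
      norm_mul, Complex.norm_real, Real.norm_of_nonneg (by positivity), norm_sub_rev]
    have hA0 : 0 ≤ ∫ r in (0 : ℝ)..t, |h r| :=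
      intervalIntegral.integral_nonneg ht.1 fun _ _ => abs_nonneg _
    refine (mul_le_mul (div_le_div_of_nonneg_right hU zero_le_two) hbound (norm_nonneg _)
      (by positivity)).trans (le_of_eq ?_)
    rw [Nat.factorial_succ, mul_pow _ (∫ r in (0 : ℝ)..t, |h r|)]
    have := Nat.factorial_ne_zero n
    push_cast
    field_simp
    ring

/-- Uniqueness for the flow equation of characteristic functions. -/
lemma IsCharFlow.unique {h : ℝ → ℝ} {T U M : ℝ} {Φ Ψ : ℝ → ℝ → ℂ}
    (hint : IntervalIntegrable h volume 0 T) (hcont : ContinuousOn h (Ioi 0))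
    (hΦ : IsCharFlow h T U M Φ) (hΨ : IsCharFlow h T U M Ψ) {t u : ℝ}
    (ht : t ∈ Icc 0 T) (hu : u ∈ Icc (-U) U) : Φ t u = Ψ t u := by
  rw [← sub_eq_zero, ← norm_le_zero_iff]
  refine ge_of_tendsto' (x := atTop) ?_ fun n => hΦ.norm_sub_le hint hcont hΨ n t ht u hu
  simpa using (FloorSemiring.tendsto_pow_div_factorial_atTop
    (U ^ 2 * M * ∫ r in (0 : ℝ)..t, |h r|)).const_mul (2 * M)

lemma succ_succ_mul_catalan_succ (n : ℕ) :
    ((n : ℝ) + 2) * catalan (n + 1) = 2 * (2 * n + 1) * catalan n := by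
  have h1 := succ_mul_catalan_eq_centralBinom n
  have h2 := succ_mul_catalan_eq_centralBinom (n + 1)
  have h3 := Nat.succ_mul_centralBinom_succ n
  rw [← h1, ← h2] at h3
  have h4 : ((n : ℝ) + 1) * ((n + 1 + 1) * catalan (n + 1)) =
      2 * (2 * n + 1) * ((n + 1) * catalan n) := by exact_mod_cast h3
  have h5 : (n : ℝ) + 1 ≠ 0 := by positivity
  apply mul_left_cancel₀ h5
  linarith

lemma integral_sqrt_sq_sub_sq {b : ℝ} (hb : 0 < b) :
    ∫ x in (-b)..b, √(b ^ 2 - x ^ 2) = b ^ 2 * (Real.pi / 2) := by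
  have h := intervalIntegral.mul_integral_comp_mul_left (a := -1) (b := 1)
    (f := fun x => √(b ^ 2 - x ^ 2)) b
  simp only [mul_neg, mul_one] at h
  rw [← h]
  have : ∀ x : ℝ, √(b ^ 2 - (b * x) ^ 2) = b * √(1 - x ^ 2) := by
    intro x
    rw [show b ^ 2 - (b * x) ^ 2 = b ^ 2 * (1 - x ^ 2) by ring, Real.sqrt_mul (by positivity),
      Real.sqrt_sq hb.le]
  simp only [this]
  rw [intervalIntegral.integral_const_mul, integral_sqrt_one_sub_sq]
  ring

lemma integral_pow_mul_sqrt_succ {b : ℝ} (hb : 0 < b) (k : ℕ) :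
    (2 * k + 4) * ∫ x in (-b)..b, x ^ (2 * (k + 1)) * √(b ^ 2 - x ^ 2) =
      b ^ 2 * (2 * k + 1) * ∫ x in (-b)..b, x ^ (2 * k) * √(b ^ 2 - x ^ 2) := by
  have key := intervalIntegral.integral_eq_sub_of_hasDerivAt_of_le (a := -b) (b := b)
    (f := fun x => x ^ (2 * k + 1) * (b ^ 2 - x ^ 2) * √(b ^ 2 - x ^ 2))
    (f' := fun x => b ^ 2 * (2 * k + 1) * (x ^ (2 * k) * √(b ^ 2 - x ^ 2)) -
      (2 * k + 4) * (x ^ (2 * (k + 1)) * √(b ^ 2 - x ^ 2))) (by linarith)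
    (Continuous.continuousOn (by fun_prop)) (fun x hx => ?_)
    (Continuous.intervalIntegrable (by fun_prop) _ _)
  · rw [intervalIntegral.integral_sub (Continuous.intervalIntegrable (by fun_prop) _ _)
      (Continuous.intervalIntegrable (by fun_prop) _ _), intervalIntegral.integral_const_mul,
      intervalIntegral.integral_const_mul] at key
    simp at key
    linarith
  · have hpos : 0 < b ^ 2 - x ^ 2 := by nlinarith [hx.1, hx.2]
    have hq : HasDerivAt (fun x : ℝ => b ^ 2 - x ^ 2) (-(2 * x)) x := by
      simpa using (hasDerivAt_pow 2 x).const_sub (b ^ 2)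
    refine (((hasDerivAt_pow (2 * k + 1) x).fun_mul hq).fun_mul
      (hq.sqrt hpos.ne')).congr_deriv ?_
    have hs : √(b ^ 2 - x ^ 2) ≠ 0 := (Real.sqrt_pos.mpr hpos).ne'
    have hs2 := Real.sq_sqrt hpos.le
    generalize √(b ^ 2 - x ^ 2) = r at hs hs2 ⊢
    have hb2 : b ^ 2 = r ^ 2 + x ^ 2 := by linarith
    rw [hb2]
    push_cast
    field_simp
    ring

lemma integral_pow_mul_sqrt {v b : ℝ} (hb : 0 < b) (hv : b ^ 2 = 4 * v) (k : ℕ) :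
    ∫ x in (-b)..b, x ^ (2 * k) * √(b ^ 2 - x ^ 2) =
      2 * Real.pi * v * (v ^ k * catalan k) := by
  induction k with
  | zero =>
    simp only [mul_zero, pow_zero, one_mul, catalan_zero]
    rw [integral_sqrt_sq_sub_sq hb, hv]
    push_cast
    ring
  | succ k ih =>
    have h := integral_pow_mul_sqrt_succ hb k
    have hc := succ_succ_mul_catalan_succ k
    rw [ih, hv] at h
    have hk : (2 * k + 4 : ℝ) ≠ 0 := by positivity
    rw [hv]
    apply mul_left_cancel₀ hk
    rw [h, pow_succ]
    linear_combination (-4 * Real.pi * v * v ^ k * v) * hc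

/-- The density of the semicircle distribution with variance `v`. -/
noncomputable def semicircleDensity (v x : ℝ) : ℝ :=
  (2 * Real.pi * v)⁻¹ * √(4 * v - x ^ 2)

lemma continuous_semicircleDensity (v : ℝ) : Continuous (semicircleDensity v) := by
  unfold semicircleDensity
  fun_prop

lemma semicircleDensity_nonneg {v : ℝ} (hv : 0 < v) (x : ℝ) : 0 ≤ semicircleDensity v x := by
  have := Real.pi_pos
  unfold semicircleDensity
  positivity

lemma semicircleDensity_eq_zero {v b x : ℝ} (hb : 0 < b) (hv : b ^ 2 = 4 * v)
    (hx : x ∉ Ioc (-b) b) : semicircleDensity v x = 0 := by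
  have : 4 * v - x ^ 2 ≤ 0 := by
    rw [← hv, sub_nonpos, sq_le_sq, abs_of_pos hb, le_abs]
    by_contra! hcon
    exact hx ⟨by linarith, by linarith⟩
  rw [semicircleDensity, Real.sqrt_eq_zero_of_nonpos this, mul_zero]

lemma integral_semicircleDensity_mul {v b : ℝ} (hb : 0 < b) (hv : b ^ 2 = 4 * v) (f : ℝ → ℝ) :
    ∫ x, semicircleDensity v x * f x = ∫ x in (-b)..b, semicircleDensity v x * f x := by
  rw [intervalIntegral.integral_of_le (by linarith), ← integral_indicator measurableSet_Ioc]
  congr 1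
  ext x
  by_cases hx : x ∈ Ioc (-b) b
  · rw [indicator_of_mem hx]
  · rw [indicator_of_notMem hx, semicircleDensity_eq_zero hb hv hx, zero_mul]

lemma integrable_semicircleDensity {v : ℝ} (hv : 0 < v) : Integrable (semicircleDensity v) := by
  have hb : 0 < 2 * √v := by positivity
  have hbv : (2 * √v) ^ 2 = 4 * v := by rw [mul_pow, Real.sq_sqrt hv.le]; norm_num
  refine (continuous_semicircleDensity v).integrable_of_hasCompactSupport ?_
  refine HasCompactSupport.intro (isCompact_Icc (a := -(2 * √v)) (b := 2 * √v)) fun x hx => ?_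
  exact semicircleDensity_eq_zero hb hbv fun h => hx (Ioc_subset_Icc_self h)

lemma isFiniteMeasure_semicircle {v : ℝ} (hv : 0 < v) : IsFiniteMeasure (semicircle v) :=
  isFiniteMeasure_withDensity_ofReal (integrable_semicircleDensity hv).2

lemma integral_semicircle {v : ℝ} (hv : 0 < v) (f : ℝ → ℝ) :
    ∫ x, f x ∂(semicircle v) = ∫ x, semicircleDensity v x * f x := by
  have hm : Measurable fun x => ENNReal.ofReal (semicircleDensity v x) :=
    (continuous_semicircleDensity v).measurable.ennreal_ofReal
  have h := integral_withDensity_eq_integral_toReal_smul (μ := volume) hm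
    (Eventually.of_forall fun _ => ENNReal.ofReal_lt_top) f
  refine h.trans (integral_congr_ae (Eventually.of_forall fun x => ?_))
  simp only [smul_eq_mul, ENNReal.toReal_ofReal (semicircleDensity_nonneg hv x)]

lemma integral_cos_semicircle {v : ℝ} (hv : 0 < v) (u : ℝ) :
    ∫ x, Real.cos (u * x) ∂(semicircle v) = charSeries (v * u ^ 2) := by
  set b := 2 * √v with hbdef
  have hb : 0 < b := by positivity
  have hbv : b ^ 2 = 4 * v := by rw [hbdef, mul_pow, Real.sq_sqrt hv.le]; norm_num
  have hpi := Real.pi_pos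
  rw [integral_semicircle hv, integral_semicircleDensity_mul hb hbv]
  have hterm : ∀ k : ℕ, ∫ x in (-b)..b,
      semicircleDensity v x * ((-1) ^ k * (u * x) ^ (2 * k) / (2 * k)!) =
      charCoeff k * (v * u ^ 2) ^ k := by
    intro k
    have : ∀ x : ℝ, semicircleDensity v x * ((-1) ^ k * (u * x) ^ (2 * k) / (2 * k)!) =
        ((2 * Real.pi * v)⁻¹ * (-1) ^ k * u ^ (2 * k) / (2 * k)!) *
          (x ^ (2 * k) * √(b ^ 2 - x ^ 2)) := by
      intro x
      rw [semicircleDensity, hbv, mul_pow]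
      ring
    simp only [this]
    rw [intervalIntegral.integral_const_mul, integral_pow_mul_sqrt hb hbv, charCoeff, mul_pow,
      ← pow_mul]
    field_simp
  have hsum : HasSum (fun k : ℕ => ∫ x in (-b)..b,
      semicircleDensity v x * ((-1) ^ k * (u * x) ^ (2 * k) / (2 * k)!))
      (∫ x in (-b)..b, semicircleDensity v x * Real.cos (u * x)) := by
    refine intervalIntegral.hasSum_integral_of_dominated_convergence
      (fun k x => semicircleDensity v x * ((|u| * b) ^ (2 * k) / (2 * k)!)) (fun k => ?_)
      (fun k => Eventually.of_forall fun x hx => ?_) (Eventually.of_forall fun x _ => ?_) ?_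
      (Eventually.of_forall fun x _ => (Real.hasSum_cos (u * x)).mul_left _)
    · have := continuous_semicircleDensity v
      exact Continuous.aestronglyMeasurable (by fun_prop)
    · rw [uIoc_of_le (by linarith)] at hx
      rw [norm_mul, Real.norm_of_nonneg (semicircleDensity_nonneg hv x), norm_div, norm_mul,
        norm_pow, norm_neg, norm_one, one_pow, one_mul, norm_pow, norm_mul, Real.norm_natCast]
      have hxb : ‖x‖ ≤ b := abs_le.mpr ⟨hx.1.le, hx.2⟩
      have := semicircleDensity_nonneg hv x
      simp only [Real.norm_eq_abs] at hxb ⊢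
      gcongr
    · exact ((Real.summable_pow_div_factorial (|u| * b)).comp_injective
        (mul_right_injective₀ two_ne_zero)).mul_left _
    · simp only [tsum_mul_left]
      exact ((continuous_semicircleDensity v).intervalIntegrable _ _).mul_const _
  simp only [hterm] at hsum
  exact hsum.unique (hasSum_charSeries _)

lemma integral_sin_semicircle {v : ℝ} (hv : 0 < v) (u : ℝ) :
    ∫ x, Real.sin (u * x) ∂(semicircle v) = 0 := by
  rw [integral_semicircle hv]
  have h := integral_neg_eq_self (fun x => semicircleDensity v x * Real.sin (u * x)) volume
  simp only [semicircleDensity, neg_sq, mul_neg, Real.sin_neg, integral_neg] at h ⊢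
  linarith

lemma integrable_cexp_mul_I (ν : Measure ℝ) [IsFiniteMeasure ν] (u : ℝ) :
    Integrable (fun x : ℝ => Complex.exp (u * x * Complex.I)) ν := by
  refine Integrable.of_bound (Continuous.aestronglyMeasurable (by fun_prop)) 1
    (Eventually.of_forall fun x => ?_)
  rw [← Complex.ofReal_mul, Complex.norm_exp_ofReal_mul_I]

lemma re_charFun (ν : Measure ℝ) [IsFiniteMeasure ν] (u : ℝ) :
    (charFun ν u).re = ∫ x, Real.cos (u * x) ∂ν := by
  rw [charFun_apply_real]
  refine (Complex.reCLM.integral_comp_comm (integrable_cexp_mul_I ν u)).symm.trans ?_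
  refine integral_congr_ae (Eventually.of_forall fun x => ?_)
  simp only [Complex.reCLM_apply]
  rw [← Complex.ofReal_mul, Complex.exp_ofReal_mul_I_re]

lemma im_charFun (ν : Measure ℝ) [IsFiniteMeasure ν] (u : ℝ) :
    (charFun ν u).im = ∫ x, Real.sin (u * x) ∂ν := by
  rw [charFun_apply_real]
  refine (Complex.imCLM.integral_comp_comm (integrable_cexp_mul_I ν u)).symm.trans ?_
  refine integral_congr_ae (Eventually.of_forall fun x => ?_)
  simp only [Complex.imCLM_apply]
  rw [← Complex.ofReal_mul, Complex.exp_ofReal_mul_I_im]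

/-- The characteristic function of the semicircle distribution. -/
lemma charFun_semicircle {v : ℝ} (hv : 0 < v) (u : ℝ) :
    charFun (semicircle v) u = charSeries (v * u ^ 2) := by
  have := isFiniteMeasure_semicircle hv
  apply Complex.ext
  · rw [re_charFun, integral_cos_semicircle hv, Complex.ofReal_re]
  · rw [im_charFun, integral_sin_semicircle hv, Complex.ofReal_im]

lemma diffQuot_eq_integral {f : ℝ → ℝ} (hf : ContDiff ℝ 2 f) (x y : ℝ) :
    diffQuot f x y = ∫ a in (0 : ℝ)..1, deriv (deriv f) (a * x + (1 - a) * y) := by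
  have hf1 : ContDiff ℝ 1 (deriv f) := hf.deriv'
  have hf2 : Continuous (deriv (deriv f)) := hf1.continuous_deriv le_rfl
  by_cases hxy : x = y
  · subst hxy
    simp [diffQuot, ← add_mul]
  · have hne : x - y ≠ 0 := sub_ne_zero.mpr hxy
    rw [diffQuot, if_neg hxy, intervalIntegral.integral_eq_sub_of_hasDerivAt
      (f := fun a => deriv f (a * x + (1 - a) * y) / (x - y)) (fun a _ => ?_)
      (Continuous.intervalIntegrable (by fun_prop) _ _)]
    · simp
      ring
    · have h1 : HasDerivAt (fun a : ℝ => a * x + (1 - a) * y) (x - y) a := by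
        refine (((hasDerivAt_id' a).mul_const x).fun_add
          (((hasDerivAt_id' a).const_sub 1).mul_const y)).congr_deriv ?_
        ring
      have h2 := (hf1.differentiable one_ne_zero (a * x + (1 - a) * y)).hasDerivAt
      refine ((h2.comp a h1).div_const (x - y)).congr_deriv ?_
      field_simp

lemma isCb3_of_comp_const_mul {f : ℝ → ℝ} (hf : ContDiff ℝ 3 f)
    (hb : ∀ k x, |iteratedDeriv k f x| ≤ 1) (u : ℝ) : IsCb3 fun x => f (u * x) := by
  refine ⟨hf.comp (contDiff_const.mul contDiff_id), fun k hk => ⟨|u| ^ k, fun x => ?_⟩⟩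
  rw [iteratedDeriv_comp_const_mul (hf.of_le (by exact_mod_cast hk)), abs_mul, abs_pow]
  exact mul_le_of_le_one_right (by positivity) (hb k _)

lemma deriv_deriv_comp_const_mul {f : ℝ → ℝ} (hf : ContDiff ℝ 2 f) (u x : ℝ) :
    deriv (deriv fun x => f (u * x)) x = u ^ 2 * deriv (deriv f) (u * x) := by
  have h := congrFun (iteratedDeriv_comp_const_mul (n := 2) (by exact_mod_cast hf) u) x
  simpa [iteratedDeriv_succ] using h

lemma integral_integral_intervalIntegral_swap (ν : Measure ℝ) [IsFiniteMeasure ν]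
    {k : ℝ → ℝ → ℝ → ℝ} (hk : Continuous fun p : ℝ × ℝ × ℝ => k p.1 p.2.1 p.2.2)
    (hb : ∀ a x y, |k a x y| ≤ 1) :
    ∫ x, ∫ y, (∫ a in (0 : ℝ)..1, k a x y) ∂ν ∂ν =
      ∫ a in (0 : ℝ)..1, ∫ x, ∫ y, k a x y ∂ν ∂ν := by
  have : IsFiniteMeasure (volume.restrict (uIoc (0 : ℝ) 1)) := by
    rw [uIoc_of_le zero_le_one]
    infer_instance
  have hinner : ∀ x, ∫ y, (∫ a in (0 : ℝ)..1, k a x y) ∂ν =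
      ∫ a in (0 : ℝ)..1, ∫ y, k a x y ∂ν := by
    intro x
    refine (intervalIntegral_integral_swap ?_).symm
    refine Integrable.of_bound (C := 1) ?_ (Eventually.of_forall fun p => hb _ _ _)
    exact (hk.comp (by fun_prop : Continuous fun p : ℝ × ℝ => (p.1, x, p.2))).aestronglyMeasurable
  simp only [hinner]
  refine (intervalIntegral_integral_swap ?_).symm
  have hc : Continuous fun p : ℝ × ℝ => ∫ y, k p.1 p.2 y ∂ν := by
    refine continuous_of_dominated (bound := fun _ => 1) (fun p => ?_)
      (fun p => Eventually.of_forall fun y => hb _ _ _) (integrable_const _)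
      (Eventually.of_forall fun y => ?_)
    · exact (hk.comp
        (by fun_prop : Continuous fun y : ℝ => (p.1, p.2, y))).aestronglyMeasurable
    · exact hk.comp (by fun_prop : Continuous fun p : ℝ × ℝ => (p.1, p.2, y))
  refine Integrable.of_bound (C := 1 * ν.real univ) hc.aestronglyMeasurable
    (Eventually.of_forall fun p => ?_)
  exact norm_integral_le_of_norm_le_const (Eventually.of_forall fun y => hb _ _ _)

lemma integrable_cos_mul (ν : Measure ℝ) [IsFiniteMeasure ν] (u : ℝ) :
    Integrable (fun x : ℝ => Real.cos (u * x)) ν :=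
  Integrable.of_bound (Continuous.aestronglyMeasurable (by fun_prop)) 1
    (Eventually.of_forall fun _ => Real.abs_cos_le_one _)

lemma integrable_sin_mul (ν : Measure ℝ) [IsFiniteMeasure ν] (u : ℝ) :
    Integrable (fun x : ℝ => Real.sin (u * x)) ν :=
  Integrable.of_bound (Continuous.aestronglyMeasurable (by fun_prop)) 1
    (Eventually.of_forall fun _ => Real.abs_sin_le_one _)

lemma integral_integral_cos_add (ν : Measure ℝ) [IsFiniteMeasure ν] (p q : ℝ) :
    ∫ x, ∫ y, Real.cos (p * x + q * y) ∂ν ∂ν = (charFun ν p * charFun ν q).re := by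
  simp only [Real.cos_add]
  have h : ∀ x, ∫ y, (Real.cos (p * x) * Real.cos (q * y) - Real.sin (p * x) * Real.sin (q * y)) ∂ν
      = Real.cos (p * x) * (charFun ν q).re - Real.sin (p * x) * (charFun ν q).im := by
    intro x
    rw [integral_sub ((integrable_cos_mul ν q).const_mul _) ((integrable_sin_mul ν q).const_mul _),
      integral_const_mul, integral_const_mul, re_charFun, im_charFun]
  simp only [h]
  rw [integral_sub ((integrable_cos_mul ν p).mul_const _) ((integrable_sin_mul ν p).mul_const _),
    integral_mul_const, integral_mul_const, ← re_charFun, ← im_charFun, Complex.mul_re]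

lemma integral_integral_sin_add (ν : Measure ℝ) [IsFiniteMeasure ν] (p q : ℝ) :
    ∫ x, ∫ y, Real.sin (p * x + q * y) ∂ν ∂ν = (charFun ν p * charFun ν q).im := by
  simp only [Real.sin_add]
  have h : ∀ x, ∫ y, (Real.sin (p * x) * Real.cos (q * y) + Real.cos (p * x) * Real.sin (q * y)) ∂ν
      = Real.sin (p * x) * (charFun ν q).re + Real.cos (p * x) * (charFun ν q).im := by
    intro x
    rw [integral_add ((integrable_cos_mul ν q).const_mul _) ((integrable_sin_mul ν q).const_mul _),
      integral_const_mul, integral_const_mul, re_charFun, im_charFun]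
  simp only [h]
  rw [integral_add ((integrable_sin_mul ν p).mul_const _) ((integrable_cos_mul ν p).mul_const _),
    integral_mul_const, integral_mul_const, ← re_charFun, ← im_charFun, Complex.mul_im]
  ring

lemma intervalIntegrable_selfAverage (ν : Measure ℝ) [IsFiniteMeasure ν] (u : ℝ) :
    IntervalIntegrable (fun a : ℝ => charFun ν (a * u) * charFun ν ((1 - a) * u)) volume 0 1 := by
  have := continuous_charFun (μ := ν)
  exact Continuous.intervalIntegrable (by fun_prop) _ _

lemma integral_diffQuot_cos (ν : Measure ℝ) [IsFiniteMeasure ν] (u : ℝ) :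
    ∫ x, ∫ y, diffQuot (fun x => Real.cos (u * x)) x y ∂ν ∂ν =
      -u ^ 2 * (selfAverage (charFun ν) u).re := by
  have h : ∀ x y, diffQuot (fun x => Real.cos (u * x)) x y =
      -u ^ 2 * ∫ a in (0 : ℝ)..1, Real.cos (a * u * x + (1 - a) * u * y) := by
    intro x y
    rw [diffQuot_eq_integral (f := fun x => Real.cos (u * x)) (by fun_prop),
      ← intervalIntegral.integral_const_mul]
    congr 1
    ext a
    rw [deriv_deriv_comp_const_mul Real.contDiff_cos]
    simp only [Real.deriv_cos', deriv.fun_neg', Real.deriv_sin]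
    ring_nf
  simp only [h, integral_const_mul]
  rw [integral_integral_intervalIntegral_swap ν
    (k := fun a x y => Real.cos (a * u * x + (1 - a) * u * y)) (by fun_prop)
    (fun _ _ _ => Real.abs_cos_le_one _)]
  simp only [integral_integral_cos_add]
  rw [selfAverage]
  exact congrArg _ (Complex.reCLM.intervalIntegral_comp_comm (intervalIntegrable_selfAverage ν u))

lemma integral_diffQuot_sin (ν : Measure ℝ) [IsFiniteMeasure ν] (u : ℝ) :
    ∫ x, ∫ y, diffQuot (fun x => Real.sin (u * x)) x y ∂ν ∂ν =
      -u ^ 2 * (selfAverage (charFun ν) u).im := by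
  have h : ∀ x y, diffQuot (fun x => Real.sin (u * x)) x y =
      -u ^ 2 * ∫ a in (0 : ℝ)..1, Real.sin (a * u * x + (1 - a) * u * y) := by
    intro x y
    rw [diffQuot_eq_integral (f := fun x => Real.sin (u * x)) (by fun_prop),
      ← intervalIntegral.integral_const_mul]
    congr 1
    ext a
    rw [deriv_deriv_comp_const_mul Real.contDiff_sin]
    simp only [Real.deriv_sin, Real.deriv_cos]
    ring_nf
  simp only [h, integral_const_mul]
  rw [integral_integral_intervalIntegral_swap ν
    (k := fun a x y => Real.sin (a * u * x + (1 - a) * u * y)) (by fun_prop)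
    (fun _ _ _ => Real.abs_sin_le_one _)]
  simp only [integral_integral_sin_add]
  rw [selfAverage]
  exact congrArg _ (Complex.imCLM.intervalIntegral_comp_comm (intervalIntegrable_selfAverage ν u))

lemma continuousOn_charFun {μ : ℝ → ProbabilityMeasure ℝ} {s : Set ℝ} (hμ : ContinuousOn μ s)
    (u : ℝ) : ContinuousOn (fun t => charFun (μ t : Measure ℝ) u) s := by
  intro t ht
  have h := (ProbabilityMeasure.tendsto_iff_forall_integral_rclike_tendsto ℂ).mp (hμ t ht)
    (BoundedContinuousFunction.innerProbChar u)
  simpa only [ContinuousWithinAt, charFun_eq_integral_innerProbChar] using h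

/-- The characteristic functions of a measure flow started from `δ₀` satisfy the flow equation of
characteristic functions. -/
lemma isCharFlow_charFun {R : ℝ → ℝ → ℝ} {μ : ℝ → ProbabilityMeasure ℝ}
    (hμc : ContinuousOn μ (Ici 0)) (hμ : SolvesFlow R μ) (h0 : (μ 0 : Measure ℝ) = Measure.dirac 0)
    {T U M : ℝ} (hint : IntervalIntegrable (deriv fun u => R u u) volume 0 T) (hM : 1 ≤ M) :
    IsCharFlow (deriv fun u => R u u) T U M fun t u => charFun (μ t : Measure ℝ) u := by
  have hr : ∀ s ∈ Icc 0 T, Continuous fun u => charFun (μ s : Measure ℝ) u :=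
    fun s _ => continuous_charFun
  have hl : ∀ u, ContinuousOn (fun s => charFun (μ s : Measure ℝ) u) (Icc 0 T) :=
    fun u => (continuousOn_charFun hμc u).mono Icc_subset_Ici_self
  have hn : ∀ s ∈ Icc 0 T, ∀ u ∈ Icc (-U) U, ‖charFun (μ s : Measure ℝ) u‖ ≤ M :=
    fun s _ u _ => (norm_charFun_le_one u).trans hM
  refine ⟨hr, hl, hn, fun t ht u hu => ?_⟩
  have hint' : IntervalIntegrable (deriv fun u => R u u) volume 0 t :=
    hint.mono_set (uIcc_subset_uIcc_left (by rw [uIcc_of_le (ht.1.trans ht.2)]; exact ht))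
  have hint_c : IntervalIntegrable (fun s => ((deriv (fun u => R u u) s : ℝ) : ℂ)) volume 0 t :=
    ⟨hint'.1.ofReal, hint'.2.ofReal⟩
  have hprod : IntervalIntegrable (fun s => ((deriv (fun u => R u u) s : ℝ) : ℂ) *
      selfAverage (charFun (μ s : Measure ℝ)) u) volume 0 t := by
    refine hint_c.mul_continuousOn ?_
    rw [uIcc_of_le ht.1]
    exact (continuousOn_selfAverage hr hl hn hu).mono (Icc_subset_Icc_right ht.2)
  have hcos := hμ t ht.1 _
    (isCb3_of_comp_const_mul Real.contDiff_cos Real.abs_iteratedDeriv_cos_le_one u)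
  have hsin := hμ t ht.1 _
    (isCb3_of_comp_const_mul Real.contDiff_sin Real.abs_iteratedDeriv_sin_le_one u)
  have hre := Complex.reCLM.intervalIntegral_comp_comm hprod
  have him := Complex.imCLM.intervalIntegral_comp_comm hprod
  simp only [Complex.reCLM_apply, Complex.re_ofReal_mul] at hre
  simp only [Complex.imCLM_apply, Complex.im_ofReal_mul] at him
  simp only [integral_diffQuot_cos, mul_left_comm _ (-u ^ 2), intervalIntegral.integral_const_mul,
    h0, integral_dirac, mul_zero, Real.cos_zero] at hcos
  simp only [integral_diffQuot_sin, mul_left_comm _ (-u ^ 2), intervalIntegral.integral_const_mul,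
    h0, integral_dirac, mul_zero, Real.sin_zero] at hsin
  apply Complex.ext
  · rw [re_charFun, hcos, hre, Complex.sub_re, Complex.re_ofReal_mul, Complex.one_re]
    ring
  · rw [im_charFun, hsin, him, Complex.sub_im, Complex.im_ofReal_mul, Complex.one_im]
    ring

lemma selfAverage_charSeries (v u : ℝ) :
    selfAverage (fun u => (charSeries (v * u ^ 2) : ℂ)) u =
      ((∫ a in (0 : ℝ)..1, charSeries (v * u ^ 2 * a ^ 2) * charSeries (v * u ^ 2 * (1 - a) ^ 2)
        : ℝ) : ℂ) := by
  rw [selfAverage, ← intervalIntegral.integral_ofReal]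
  congr 1
  ext a
  rw [Complex.ofReal_mul, mul_pow, mul_pow]
  ring_nf

lemma isCharFlow_charSeries {g h : ℝ → ℝ} {T : ℝ} (hg : ContinuousOn g (Icc 0 T)) (hg0 : g 0 = 0)
    (hderiv : ∀ s ∈ Ioo 0 T, HasDerivAt g (h s) s) (hint : IntervalIntegrable h volume 0 T)
    {U M : ℝ} (hM : ∀ s ∈ Icc 0 T, ∀ u ∈ Icc (-U) U, |charSeries (g s * u ^ 2)| ≤ M) :
    IsCharFlow h T U M fun t u => (charSeries (g t * u ^ 2) : ℂ) := by
  have hF := continuous_charSeries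
  have hr : ∀ s ∈ Icc 0 T, Continuous fun u => (charSeries (g s * u ^ 2) : ℂ) :=
    fun s _ => by fun_prop
  have hlr : ∀ u, ContinuousOn (fun s => charSeries (g s * u ^ 2)) (Icc 0 T) :=
    fun u => hF.comp_continuousOn (hg.mul continuousOn_const)
  have hl : ∀ u, ContinuousOn (fun s => (charSeries (g s * u ^ 2) : ℂ)) (Icc 0 T) :=
    fun u => Complex.continuous_ofReal.comp_continuousOn (hlr u)
  have hn : ∀ s ∈ Icc 0 T, ∀ u ∈ Icc (-U) U, ‖(charSeries (g s * u ^ 2) : ℂ)‖ ≤ M :=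
    fun s hs u hu => by simpa using hM s hs u hu
  refine ⟨hr, hl, hn, fun t ht u hu => ?_⟩
  have hsub : Icc 0 t ⊆ Icc 0 T := Icc_subset_Icc_right ht.2
  have hint' : IntervalIntegrable h volume 0 t :=
    hint.mono_set (uIcc_subset_uIcc_left (by rw [uIcc_of_le (ht.1.trans ht.2)]; exact ht))
  have hc := (continuousOn_selfAverage hr hl hn hu).mono hsub
  simp only [selfAverage_charSeries] at hc ⊢
  have hc' := Complex.continuous_re.comp_continuousOn hc
  simp only [Function.comp_def, Complex.ofReal_re] at hc'
  set J : ℝ → ℝ := fun s => ∫ a in (0 : ℝ)..1,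
    charSeries (g s * u ^ 2 * a ^ 2) * charSeries (g s * u ^ 2 * (1 - a) ^ 2) with hJ
  have hJint : IntervalIntegrable (fun s => h s * J s) volume 0 t :=
    hint'.mul_continuousOn (by rwa [uIcc_of_le ht.1])
  have key := intervalIntegral.integral_eq_sub_of_hasDerivAt_of_le
    (f := fun s => charSeries (g s * u ^ 2)) (f' := fun s => -(u ^ 2 / 2) * (h s * J s)) ht.1
    ((hlr u).mono hsub) (fun s hs => ?_) (hJint.const_mul _)
  · rw [intervalIntegral.integral_const_mul, hg0, zero_mul, charSeries_zero] at key
    have hcast : ∫ s in (0 : ℝ)..t, (h s : ℂ) * (J s : ℂ) =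
        ((∫ s in (0 : ℝ)..t, h s * J s : ℝ) : ℂ) := by
      rw [← intervalIntegral.integral_ofReal]
      simp only [Complex.ofReal_mul]
    rw [hcast, ← Complex.ofReal_mul, ← Complex.ofReal_one, ← Complex.ofReal_sub]
    congr 1
    linarith
  · have hgs := (hderiv s ⟨hs.1, hs.2.trans_le ht.2⟩).mul_const (u ^ 2)
    refine ((hasDerivAt_charSeries (g s * u ^ 2)).comp s hgs).congr_deriv ?_
    simp only [hJ]
    ring

/-- A function that is continuous on `[0, T]` and `C¹` on `(0, ∞)`, whose derivative has finitely
many zeros in `(0, T]`, has an integrable derivative on `[0, T]`. -/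
lemma intervalIntegrable_deriv_of_finite_zeros {g : ℝ → ℝ} {T : ℝ} (hT : 0 < T)
    (hg : ContinuousOn g (Icc 0 T)) (hd : ∀ s ∈ Ioi (0 : ℝ), HasDerivAt g (deriv g s) s)
    (hc : ContinuousOn (deriv g) (Ioi 0)) (hz : {s ∈ Ioc (0 : ℝ) T | deriv g s = 0}.Finite) :
    IntervalIntegrable (deriv g) volume 0 T := by
  obtain ⟨ε, hε, hεT, hne⟩ : ∃ ε, 0 < ε ∧ ε ≤ T ∧ ∀ s ∈ Ioo 0 ε, deriv g s ≠ 0 := by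
    have hnhds : ∀ᶠ s in 𝓝[>] (0 : ℝ), s ∉ {s ∈ Ioc (0 : ℝ) T | deriv g s = 0} :=
      mem_nhdsWithin_of_mem_nhds (hz.isClosed.isOpen_compl.mem_nhds fun h => lt_irrefl _ h.1.1)
    obtain ⟨δ, hδ, hδs⟩ := mem_nhdsGT_iff_exists_Ioo_subset.mp hnhds
    refine ⟨min δ T, lt_min hδ hT, min_le_right _ _, fun s hs h => ?_⟩
    exact hδs ⟨hs.1, hs.2.trans_le (min_le_left _ _)⟩
      ⟨⟨hs.1, hs.2.le.trans (min_le_right _ _)⟩, h⟩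
  have hgε : ContinuousOn g (uIcc 0 ε) := by
    rw [uIcc_of_le hε.le]
    exact hg.mono (Icc_subset_Icc_right hεT)
  have hmin : min 0 ε = 0 := min_eq_left hε.le
  have hmax : max 0 ε = ε := max_eq_right hε.le
  have hfirst : IntervalIntegrable (deriv g) volume 0 ε := by
    have hsign : (∀ s ∈ Ioo 0 ε, 0 ≤ deriv g s) ∨ ∀ s ∈ Ioo 0 ε, deriv g s ≤ 0 := by
      by_contra! hcon
      obtain ⟨⟨a, ha, hga⟩, b, hb, hgb⟩ := hcon
      obtain ⟨c, hc', hgc⟩ := isPreconnected_Ioo.intermediate_value ha hb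
        (hc.mono Ioo_subset_Ioi_self) ⟨hga.le, hgb.le⟩
      exact hne c hc' hgc
    rcases hsign with hpos | hneg
    · refine intervalIntegral.intervalIntegrable_deriv_of_nonneg hgε ?_ ?_
      · rw [hmin, hmax]
        exact fun s hs => hd s hs.1
      · rwa [hmin, hmax]
    · have h := intervalIntegral.intervalIntegrable_deriv_of_nonneg (g' := fun s => -deriv g s)
        hgε.neg ?_ ?_
      · simpa only [Pi.neg_def, neg_neg] using h.neg
      · rw [hmin, hmax]
        exact fun s hs => (hd s hs.1).neg
      · rw [hmin, hmax]
        exact fun s hs => neg_nonneg.mpr (hneg s hs)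
  refine hfirst.trans (ContinuousOn.intervalIntegrable (hc.mono ?_))
  rw [uIcc_of_le hεT]
  exact fun s hs => hε.trans_le hs.1

end SemicircleFlow

/-- **Semicircle solution of the measure flow.** If `R` satisfies (H1) with `R(0,0) = 0` and
`(μ_t)` is a weakly continuous solution of the measure-flow equation for `R` started from the
Dirac mass at `0`, then for every `t ≥ 0` with `R(t,t) > 0` the measure `μ_t` is the semicircle
distribution with variance `R(t,t)`. -/
theorem flow_from_dirac_is_semicircle
    (R : ℝ → ℝ → ℝ) (hR : CondH1 R) (hR0 : R 0 0 = 0)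
    (μ : ℝ → ProbabilityMeasure ℝ)
    (hμc : ContinuousOn μ (Set.Ici 0))
    (hμ : SolvesFlow R μ)
    (h0 : (μ 0 : Measure ℝ) = Measure.dirac 0) :
    ∀ t ≥ (0 : ℝ), 0 < R t t → (μ t : Measure ℝ) = semicircle (R t t) := by
  intro t ht hRt
  have htpos : 0 < t := ht.lt_of_ne fun h => by simp [← h, hR0] at hRt
  obtain ⟨hC1, hcont0, hzeros, -⟩ := hR
  set g : ℝ → ℝ := fun s => R s s with hg
  have hderiv : ∀ s ∈ Ioi (0 : ℝ), HasDerivAt g (deriv g s) s := fun s hs =>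
    ((hC1.differentiableOn one_ne_zero).differentiableAt (Ioi_mem_nhds hs)).hasDerivAt
  have hdc : ContinuousOn (deriv g) (Ioi 0) := hC1.continuousOn_deriv_of_isOpen isOpen_Ioi le_rfl
  have hgc : ContinuousOn g (Icc 0 t) := by
    intro s hs
    rcases hs.1.eq_or_lt with rfl | hpos
    · exact hcont0.mono Icc_subset_Ici_self
    · exact (hderiv s hpos).continuousAt.continuousWithinAt
  have hint := SemicircleFlow.intervalIntegrable_deriv_of_finite_zeros htpos hgc hderiv hdc
    (hzeros t htpos)
  have := SemicircleFlow.isFiniteMeasure_semicircle hRt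
  refine Measure.ext_of_charFun (funext fun u => ?_)
  rw [SemicircleFlow.charFun_semicircle hRt]
  obtain ⟨C, hC⟩ := (isCompact_Icc.prod isCompact_Icc).exists_bound_of_continuousOn
    (s := Icc 0 t ×ˢ Icc (-|u|) |u|)
    (f := fun p : ℝ × ℝ => SemicircleFlow.charSeries (g p.1 * p.2 ^ 2))
    (SemicircleFlow.continuous_charSeries.comp_continuousOn
      ((hgc.comp continuousOn_fst fun p hp => hp.1).mul (continuousOn_snd.pow 2)))
  have hseries := SemicircleFlow.isCharFlow_charSeries (U := |u|) (M := max 1 C) hgc hR0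
    (fun s hs => hderiv s hs.1) hint fun s hs u' hu' =>
      (hC (s, u') ⟨hs, hu'⟩).trans (le_max_right _ _)
  exact (SemicircleFlow.isCharFlow_charFun hμc hμ h0 hint (le_max_left 1 C)).unique hint hdc hseries
    ⟨ht, le_rfl⟩ (abs_le.mp le_rfl)
end

section
/- For τ > 0 and z in the upper half-plane ℂ₊ define F_τ(z) := ((z−2√τ)^{1/2}(z+2√τ)^{1/2} − z)/(2τ), where w^{1/2} denotes the principal complex square root. Then: (i) for each fixed τ > 0, z ↦ F_τ(z) is complex differentiable at every z ∈ ℂ₊; (ii) for each fixed z ∈ ℂ₊, τ ↦ F_τ(z) is differentiable on (0,∞) and satisfies the Burgers equation ∂F_τ(z)/∂τ = F_τ(z) · ∂F_τ(z)/∂z; (iii) F_τ(z) → −1/z as τ → 0⁺, i.e. F satisfies the initial condition corresponding to the Dirac mass at 0. -/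
open Complex Filter

/-- `F_τ(z) = ((z−2√τ)^{1/2}(z+2√τ)^{1/2} − z)/(2τ)`, with principal complex square roots. -/
noncomputable def burgersF (τ : ℝ) (z : ℂ) : ℂ :=
  ((z - 2 * (Real.sqrt τ : ℂ)) ^ ((1 : ℂ) / 2) * (z + 2 * (Real.sqrt τ : ℂ)) ^ ((1 : ℂ) / 2)
      - z) / (2 * (τ : ℂ))

theorem Complex.cpow_half_sq (w : ℂ) : (w ^ ((1 : ℂ) / 2)) ^ 2 = w := by
  simp

theorem Complex.cpow_half_ne_zero {w : ℂ} (hw : w ≠ 0) : w ^ ((1 : ℂ) / 2) ≠ 0 := by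
  simp [Complex.cpow_eq_zero_iff, hw]

theorem Complex.hasDerivAt_cpow_half {w : ℂ} (hw : w ∈ slitPlane) :
    HasDerivAt (fun u : ℂ => u ^ ((1 : ℂ) / 2)) (1 / (2 * w ^ ((1 : ℂ) / 2))) w := by
  refine ((hasDerivAt_id w).cpow_const (c := (1 : ℂ) / 2) hw).congr_deriv ?_
  have h0 : w ≠ 0 := slitPlane_ne_zero hw
  have hne := cpow_half_ne_zero h0
  simp only [id]
  rw [cpow_sub _ _ h0, cpow_one]
  field_simp
  exact cpow_half_sq w

/-- The branch `(z−2s)^{1/2}(z+2s)^{1/2}` of the square root of `z² − 4s²`. -/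
noncomputable def sqrtBranch (s z : ℂ) : ℂ :=
  (z - 2 * s) ^ ((1 : ℂ) / 2) * (z + 2 * s) ^ ((1 : ℂ) / 2)

theorem burgersF_eq (τ : ℝ) (z : ℂ) :
    burgersF τ z = (sqrtBranch (Real.sqrt τ : ℂ) z - z) / (2 * (τ : ℂ)) := rfl

theorem sqrtBranch_sq (s z : ℂ) : sqrtBranch s z ^ 2 = z ^ 2 - 4 * s ^ 2 := by
  rw [sqrtBranch, mul_pow, cpow_half_sq, cpow_half_sq]
  ring

theorem sqrtBranch_sqrt_sq {τ : ℝ} (hτ : 0 ≤ τ) (z : ℂ) :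
    sqrtBranch (Real.sqrt τ : ℂ) z ^ 2 = z ^ 2 - 4 * τ := by
  rw [sqrtBranch_sq, ← ofReal_pow, Real.sq_sqrt hτ]

theorem sub_two_mul_ofReal_mem_slitPlane {z : ℂ} (hz : 0 < z.im) (s : ℝ) :
    z - 2 * (s : ℂ) ∈ slitPlane :=
  mem_slitPlane_iff.2 (Or.inr (by simpa using hz.ne'))

theorem add_two_mul_ofReal_mem_slitPlane {z : ℂ} (hz : 0 < z.im) (s : ℝ) :
    z + 2 * (s : ℂ) ∈ slitPlane :=
  mem_slitPlane_iff.2 (Or.inr (by simpa using hz.ne'))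

theorem sqrtBranch_ne_zero {z : ℂ} (hz : 0 < z.im) (s : ℝ) : sqrtBranch s z ≠ 0 :=
  mul_ne_zero
    (cpow_half_ne_zero (slitPlane_ne_zero (sub_two_mul_ofReal_mem_slitPlane hz s)))
    (cpow_half_ne_zero (slitPlane_ne_zero (add_two_mul_ofReal_mem_slitPlane hz s)))

theorem hasDerivAt_sqrtBranch {z : ℂ} (hz : 0 < z.im) (s : ℝ) :
    HasDerivAt (sqrtBranch s) (z / sqrtBranch s z) z := by
  have hm := sub_two_mul_ofReal_mem_slitPlane hz s
  have hp := add_two_mul_ofReal_mem_slitPlane hz s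
  have h := ((hasDerivAt_cpow_half hm).comp z ((hasDerivAt_id z).sub_const _)).mul
    ((hasDerivAt_cpow_half hp).comp z ((hasDerivAt_id z).add_const _))
  refine h.congr_deriv ?_
  have ha := cpow_half_ne_zero (slitPlane_ne_zero hm)
  have hb := cpow_half_ne_zero (slitPlane_ne_zero hp)
  have ha2 := cpow_half_sq (z - 2 * s)
  have hb2 := cpow_half_sq (z + 2 * s)
  simp only [sqrtBranch, Function.comp_apply, id]
  generalize (z - 2 * (s : ℂ)) ^ ((1 : ℂ) / 2) = a at *
  generalize (z + 2 * (s : ℂ)) ^ ((1 : ℂ) / 2) = b at *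
  field_simp
  linear_combination ha2 + hb2

theorem hasDerivAt_sqrtBranch_param {z : ℂ} (hz : 0 < z.im) (s : ℝ) :
    HasDerivAt (fun t : ℂ => sqrtBranch t z) (-4 * s / sqrtBranch s z) s := by
  have hm := sub_two_mul_ofReal_mem_slitPlane hz s
  have hp := add_two_mul_ofReal_mem_slitPlane hz s
  have hl : HasDerivAt (fun t : ℂ => 2 * t) (2 * 1) (s : ℂ) := (hasDerivAt_id _).const_mul 2
  have h := ((hasDerivAt_cpow_half hm).comp (s : ℂ) (hl.const_sub z)).mul
    ((hasDerivAt_cpow_half hp).comp (s : ℂ) (hl.const_add z))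
  refine h.congr_deriv ?_
  have ha := cpow_half_ne_zero (slitPlane_ne_zero hm)
  have hb := cpow_half_ne_zero (slitPlane_ne_zero hp)
  have ha2 := cpow_half_sq (z - 2 * s)
  have hb2 := cpow_half_sq (z + 2 * s)
  simp only [sqrtBranch, Function.comp_apply]
  generalize (z - 2 * (s : ℂ)) ^ ((1 : ℂ) / 2) = a at *
  generalize (z + 2 * (s : ℂ)) ^ ((1 : ℂ) / 2) = b at *
  field_simp
  linear_combination ha2 - hb2

theorem hasDerivAt_sqrtBranch_sqrt {z : ℂ} (hz : 0 < z.im) {τ : ℝ} (hτ : 0 < τ) :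
    HasDerivAt (fun σ : ℝ => sqrtBranch (Real.sqrt σ : ℂ) z)
      (-2 / sqrtBranch (Real.sqrt τ : ℂ) z) τ := by
  have h := (hasDerivAt_sqrtBranch_param hz (Real.sqrt τ)).comp τ
    (Real.hasDerivAt_sqrt hτ.ne').ofReal_comp
  refine h.congr_deriv ?_
  have hs : (Real.sqrt τ : ℂ) ≠ 0 := ofReal_ne_zero.2 (Real.sqrt_pos.2 hτ).ne'
  have hS := sqrtBranch_ne_zero hz (Real.sqrt τ)
  push_cast
  field_simp
  norm_num

theorem hasDerivAt_burgersF {z : ℂ} (hz : 0 < z.im) (τ : ℝ) :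
    HasDerivAt (burgersF τ) ((z / sqrtBranch (Real.sqrt τ : ℂ) z - 1) / (2 * (τ : ℂ))) z :=
  ((hasDerivAt_sqrtBranch hz (Real.sqrt τ)).sub (hasDerivAt_id z)).div_const _

theorem hasDerivAt_burgersF_time {z : ℂ} (hz : 0 < z.im) {τ : ℝ} (hτ : 0 < τ) :
    HasDerivAt (fun σ : ℝ => burgersF σ z) (burgersF τ z * deriv (burgersF τ) z) τ := by
  have hτ' : (τ : ℂ) ≠ 0 := ofReal_ne_zero.2 hτ.ne'
  have hl : HasDerivAt (fun σ : ℝ => 2 * (σ : ℂ)) (2 * 1) τ :=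
    (hasDerivAt_id τ).ofReal_comp.const_mul 2
  have h := ((hasDerivAt_sqrtBranch_sqrt hz hτ).sub_const z).div hl
    (mul_ne_zero two_ne_zero hτ')
  refine h.congr_deriv ?_
  rw [(hasDerivAt_burgersF hz τ).deriv, burgersF_eq]
  have hS := sqrtBranch_ne_zero hz (Real.sqrt τ)
  have hS2 := sqrtBranch_sqrt_sq hτ.le z
  generalize sqrtBranch (Real.sqrt τ : ℂ) z = S at *
  field_simp
  linear_combination -hS2

theorem burgersF_eq_neg_two_div {τ : ℝ} (hτ : 0 < τ) (z : ℂ) :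
    burgersF τ z = -2 / (sqrtBranch (Real.sqrt τ : ℂ) z + z) := by
  have hτ' : (τ : ℂ) ≠ 0 := ofReal_ne_zero.2 hτ.ne'
  have hS2 := sqrtBranch_sqrt_sq hτ.le z
  rw [burgersF_eq]
  generalize sqrtBranch (Real.sqrt τ : ℂ) z = S at *
  have hne : S + z ≠ 0 := fun h0 => hτ' (by linear_combination (-(S - z) / 4) * h0 + hS2 / 4)
  field_simp
  linear_combination hS2

theorem tendsto_burgersF_zero {z : ℂ} (hz : 0 < z.im) :
    Tendsto (fun τ : ℝ => burgersF τ z) (nhdsWithin 0 (Set.Ioi 0)) (nhds (-z⁻¹)) := by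
  have hz0 : z ≠ 0 := fun h => by simp [h] at hz
  have hzero : sqrtBranch ((0 : ℝ) : ℂ) z = z := by
    simpa [sqrtBranch, pow_two] using cpow_half_sq z
  have hsqrt : Tendsto (fun τ : ℝ => (Real.sqrt τ : ℂ)) (nhds 0) (nhds ((0 : ℝ) : ℂ)) := by
    have := (continuous_ofReal.comp Real.continuous_sqrt).tendsto 0
    simpa [Function.comp_def] using this
  have hS : Tendsto (fun τ : ℝ => sqrtBranch (Real.sqrt τ : ℂ) z) (nhds 0) (nhds z) := by
    have := (hasDerivAt_sqrtBranch_param hz 0).continuousAt.tendsto.comp hsqrt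
    rwa [hzero] at this
  have hlim := (tendsto_const_nhds (x := (-2 : ℂ))).div (hS.add_const z)
    (by simpa [← two_mul] using hz0)
  have hval : -2 / (z + z) = -z⁻¹ := by
    field_simp
    norm_num
  rw [hval] at hlim
  refine (hlim.mono_left nhdsWithin_le_nhds).congr' ?_
  filter_upwards [self_mem_nhdsWithin] with τ hτ
  exact (burgersF_eq_neg_two_div hτ z).symm

/-- The function `F_τ(z)` is analytic in `z` on the upper half-plane for each `τ > 0`,
solves the Burgers equation `∂F/∂τ = F · ∂F/∂z` there, and satisfies the initial condition
`F_τ(z) → −1/z` as `τ → 0⁺` corresponding to the Dirac mass at `0`. -/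
theorem burgersF_solves_burgers :
    (∀ τ : ℝ, 0 < τ → ∀ z : ℂ, 0 < z.im → DifferentiableAt ℂ (burgersF τ) z) ∧
    (∀ z : ℂ, 0 < z.im → ∀ τ : ℝ, 0 < τ →
      HasDerivAt (fun σ : ℝ => burgersF σ z) (burgersF τ z * deriv (burgersF τ) z) τ) ∧
    (∀ z : ℂ, 0 < z.im →
      Tendsto (fun τ : ℝ => burgersF τ z) (nhdsWithin 0 (Set.Ioi 0)) (nhds (-z⁻¹))) :=
  ⟨fun τ _ _ hz => (hasDerivAt_burgersF hz τ).differentiableAt,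
    fun _ hz _ hτ => hasDerivAt_burgersF_time hz hτ,
    fun _ hz => tendsto_burgersF_zero hz⟩
end

section
/- Let σ > 0 and let μ be the semicircle distribution with variance σ². Then for every z in the upper half-plane ℂ₊, the Cauchy transform of μ satisfies ∫_ℝ (x − z)^{-1} μ(dx) = (1/(2σ²)) · ((z−2σ)^{1/2}(z+2σ)^{1/2} − z), where w^{1/2} denotes the principal complex square root. -/
open MeasureTheory Complex

/-- The principal square root of a point of the upper half-plane lies in the open first quadrant. -/
lemma cpow_half_re_im_pos {w : ℂ} (hw : 0 < w.im) :
    0 < (w ^ ((1 : ℂ) / 2)).re ∧ 0 < (w ^ ((1 : ℂ) / 2)).im := by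
  have hw0 : w ≠ 0 := by
    rintro rfl
    simp at hw
  have harg : 0 ≤ arg w := arg_nonneg_iff.2 hw.le
  have hlog : (log w * (1 / 2)).im = arg w / 2 := by
    rw [show (1 / 2 : ℂ) = ((1 / 2 : ℝ) : ℂ) by norm_num, im_mul_ofReal, log_im]
    ring
  have hre : 0 ≤ (w ^ ((1 : ℂ) / 2)).re := by
    rw [cpow_def_of_ne_zero hw0, exp_re, hlog]
    refine mul_nonneg (Real.exp_pos _).le (Real.cos_nonneg_of_mem_Icc ⟨?_, ?_⟩)
    · linarith [Real.pi_pos]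
    · linarith [arg_le_pi w]
  have hsq : (w ^ ((1 : ℂ) / 2)) ^ 2 = w := by
    rw [one_div]
    exact cpow_nat_inv_pow w two_ne_zero
  have him : w.im = 2 * ((w ^ ((1 : ℂ) / 2)).re * (w ^ ((1 : ℂ) / 2)).im) := by
    conv_lhs => rw [← hsq, sq, mul_im]
    ring
  have hprod : 0 < (w ^ ((1 : ℂ) / 2)).re * (w ^ ((1 : ℂ) / 2)).im := by linarith
  have hpos := hre.lt_of_ne fun h => by
    rw [← h, zero_mul] at hprod
    exact hprod.false
  exact ⟨hpos, pos_of_mul_pos_right hprod hre⟩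

/-- If `a` and `b` make an acute angle, then `(a² + b²) / 2 - ab` is smaller in modulus than
`(a² + b²) / 2 + ab`. -/
lemma norm_half_sq_add_sq_sub_lt {a b : ℂ} (h : 0 < a.re * b.re + a.im * b.im) :
    ‖(a ^ 2 + b ^ 2) / 2 - a * b‖ < ‖(a ^ 2 + b ^ 2) / 2 + a * b‖ := by
  have hsub : (a ^ 2 + b ^ 2) / 2 - a * b = (a - b) ^ 2 / 2 := by ring
  have hadd : (a ^ 2 + b ^ 2) / 2 + a * b = (a + b) ^ 2 / 2 := by ring
  have hlt : ‖a - b‖ ^ 2 < ‖a + b‖ ^ 2 := by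
    rw [Complex.sq_norm, Complex.sq_norm, normSq_apply, normSq_apply]
    simp only [sub_re, sub_im, add_re, add_im]
    nlinarith
  rw [hsub, hadd, norm_div, norm_div, norm_pow, norm_pow]
  gcongr
  simp

lemma one_sub_mul_exp_mem_slitPlane {m : ℂ} (hm : ‖m‖ < 1) (θ : ℝ) :
    1 - m * exp (θ * I) ∈ slitPlane := by
  have h : ‖-(m * exp (θ * I))‖ < 1 := by
    rwa [norm_neg, norm_mul, norm_exp_ofReal_mul_I, mul_one]
  simpa [sub_eq_add_neg] using mem_slitPlane_of_norm_lt_one h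

lemma continuous_sin_div_one_sub_mul_exp {m : ℂ} (hm : ‖m‖ < 1) :
    Continuous fun θ : ℝ => sin (θ : ℂ) / (1 - m * exp (θ * I)) := by
  refine Continuous.div (by fun_prop) (by fun_prop) fun θ => ?_
  exact slitPlane_ne_zero (one_sub_mul_exp_mem_slitPlane hm θ)

lemma hasDerivAt_primitive_sin_div_one_sub_mul_exp {m : ℂ} (hm0 : m ≠ 0) (hm : ‖m‖ < 1) (θ : ℝ) :
    HasDerivAt (fun t : ℝ => ((1 - m ^ 2) / m * log (1 - m * exp (t * I)) - exp (-(t * I))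
      + m * (t * I)) / 2) (sin (θ : ℂ) / (1 - m * exp (θ * I))) θ := by
  have hs := one_sub_mul_exp_mem_slitPlane hm θ
  have hne := slitPlane_ne_zero hs
  have hid : HasDerivAt (fun t : ℝ => (t : ℂ) * I) I θ := by
    simpa using (ofRealCLM.hasDerivAt (x := θ)).mul_const I
  have hlog := (((hid.cexp.const_mul m).const_sub 1).clog_real hs).const_mul ((1 - m ^ 2) / m)
  refine (((hlog.sub hid.fun_neg.cexp).add (hid.const_mul m)).div_const 2).congr_deriv ?_
  have hsin : sin (θ : ℂ) = (exp (-(θ * I)) - exp (θ * I)) * I / 2 := by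
    rw [Complex.sin, neg_mul]
  rw [hsin, exp_neg]
  have he := exp_ne_zero (θ * I)
  generalize exp (θ * I) = u at *
  field_simp
  ring

lemma integral_sin_div_one_sub_mul_exp {m : ℂ} (hm0 : m ≠ 0) (hm : ‖m‖ < 1) :
    ∫ θ in (-Real.pi)..Real.pi, sin (θ : ℂ) / (1 - m * exp (θ * I)) = Real.pi * I * m := by
  rw [intervalIntegral.integral_eq_sub_of_hasDerivAt
    (fun θ _ => hasDerivAt_primitive_sin_div_one_sub_mul_exp hm0 hm θ)
    ((continuous_sin_div_one_sub_mul_exp hm).intervalIntegrable _ _)]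
  simp only [ofReal_neg, neg_mul, neg_neg, exp_neg, exp_pi_mul_I]
  norm_num
  ring

lemma integral_sin_sq_div {σ : ℝ} (hσ : σ ≠ 0) {z m : ℂ} (hm0 : m ≠ 0) (hm : ‖m‖ < 1)
    (hroot : σ * m ^ 2 - z * m + σ = 0) :
    ∫ θ in (0 : ℝ)..Real.pi, (2 * σ * sin (θ : ℂ)) ^ 2 / (2 * σ * cos (θ : ℂ) - z)
      = -(2 * Real.pi * σ * m) := by
  set F : ℝ → ℂ := fun θ => sin (θ : ℂ) / (1 - m * exp (θ * I)) with hF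
  have hFc : Continuous F := continuous_sin_div_one_sub_mul_exp hm
  have hpt : ∀ θ : ℝ, (2 * σ * sin (θ : ℂ)) ^ 2 / (2 * σ * cos (θ : ℂ) - z)
      = 2 * I * σ * (F θ + F (-θ)) := by
    intro θ
    have hσ' : (σ : ℂ) ≠ 0 := ofReal_ne_zero.2 hσ
    have h1 := slitPlane_ne_zero (one_sub_mul_exp_mem_slitPlane hm θ)
    have h2 := slitPlane_ne_zero (one_sub_mul_exp_mem_slitPlane hm (-θ))
    have hexp : exp (((-θ : ℝ) : ℂ) * I) = (exp (θ * I))⁻¹ := by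
      rw [ofReal_neg, neg_mul, exp_neg]
    have hsin : 2 * I * sin (θ : ℂ) = exp (θ * I) - (exp (θ * I))⁻¹ := by
      rw [Complex.sin, neg_mul, exp_neg]
      linear_combination ((exp (θ * I))⁻¹ - exp (θ * I)) * I_sq
    have hcos : 2 * cos (θ : ℂ) = exp (θ * I) + (exp (θ * I))⁻¹ := by
      rw [Complex.cos, neg_mul, exp_neg]
      ring
    rw [hexp] at h2
    have he := exp_ne_zero (θ * I)
    have hden : 2 * σ * cos (θ : ℂ) - z
        = -(σ / m) * ((1 - m * exp (θ * I)) * (1 - m * (exp (θ * I))⁻¹)) := by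
      rw [show 2 * (σ : ℂ) * cos (θ : ℂ) = σ * (2 * cos (θ : ℂ)) by ring, hcos]
      field_simp
      linear_combination exp (θ * I) * hroot
    have hsum : F θ + F (-θ) = sin (θ : ℂ) * (m * (2 * I * sin (θ : ℂ)))
        / ((1 - m * exp (θ * I)) * (1 - m * (exp (θ * I))⁻¹)) := by
      simp only [hF, hexp]
      rw [ofReal_neg, sin_neg, hsin, div_add_div _ _ h1 h2]
      congr 1
      ring
    rw [hden, hsum, ← mul_div_assoc, div_eq_div_iff (by
      simp only [ne_eq, mul_eq_zero, neg_eq_zero, div_eq_zero_iff]; tauto) (mul_ne_zero h1 h2)]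
    field_simp
    linear_combination (sin (θ : ℂ) ^ 2 * (exp (θ * I) - m)) * I_sq
  have hFneg : Continuous fun θ => F (-θ) := hFc.comp continuous_neg
  simp_rw [hpt]
  rw [intervalIntegral.integral_const_mul, intervalIntegral.integral_add
    (hFc.intervalIntegrable _ _) (hFneg.intervalIntegrable _ _),
    intervalIntegral.integral_comp_neg, neg_zero, add_comm,
    intervalIntegral.integral_add_adjacent_intervals (hFc.intervalIntegrable _ _)
      (hFc.intervalIntegrable _ _), integral_sin_div_one_sub_mul_exp hm0 hm]
  linear_combination (2 * Real.pi * σ * m) * I_sq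

lemma integral_sqrt_mul_inv_sub_eq_integral_sin_sq_div {σ : ℝ} (hσ : 0 < σ) {z : ℂ}
    (hz : 0 < z.im) :
    ∫ x in (-(2 * σ))..(2 * σ), (Real.sqrt (4 * σ ^ 2 - x ^ 2) : ℂ) * ((x : ℂ) - z)⁻¹
      = ∫ θ in (0 : ℝ)..Real.pi, (2 * σ * sin (θ : ℂ)) ^ 2 / (2 * σ * cos (θ : ℂ) - z) := by
  have hne : ∀ x : ℝ, (x : ℂ) - z ≠ 0 := fun x h => by
    have := congrArg im h
    simp at this
    exact hz.ne' this
  have hcont : Continuous fun x : ℝ =>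
      (Real.sqrt (4 * σ ^ 2 - x ^ 2) : ℂ) * ((x : ℂ) - z)⁻¹ := by
    refine Continuous.mul (by fun_prop) (Continuous.inv₀ (by fun_prop) hne)
  have hsubst := intervalIntegral.integral_deriv_smul_comp (a := 0) (b := Real.pi)
    (f := fun θ => 2 * σ * Real.cos θ) (f' := fun θ => 2 * σ * -Real.sin θ)
    (fun θ _ => (Real.hasDerivAt_cos θ).const_mul (2 * σ)) (by fun_prop) hcont
  rw [intervalIntegral.integral_symm]
  simp only [Real.cos_zero, Real.cos_pi, mul_one, mul_neg] at hsubst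
  rw [← hsubst, ← intervalIntegral.integral_neg]
  refine intervalIntegral.integral_congr fun θ hθ => ?_
  rw [Set.uIcc_of_le Real.pi_pos.le] at hθ
  have hsqrt : Real.sqrt (4 * σ ^ 2 - (2 * σ * Real.cos θ) ^ 2) = 2 * σ * Real.sin θ := by
    rw [show 4 * σ ^ 2 - (2 * σ * Real.cos θ) ^ 2 = (2 * σ * Real.sin θ) ^ 2 by
      linear_combination (-4 * σ ^ 2) * Real.sin_sq_add_cos_sq θ]
    exact Real.sqrt_sq (mul_nonneg (by positivity) (Real.sin_nonneg_of_mem_Icc hθ))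
  simp only [Function.comp_apply, hsqrt, real_smul]
  push_cast
  ring

lemma integral_semicircle {v : ℝ} (hv : 0 ≤ v) (f : ℝ → ℂ) :
    ∫ x, f x ∂(semicircle v)
      = (2 * Real.pi * v : ℂ)⁻¹
        * ∫ x in (-(2 * Real.sqrt v))..(2 * Real.sqrt v), (Real.sqrt (4 * v - x ^ 2) : ℂ) * f x := by
  have hs := Real.sqrt_nonneg v
  rw [semicircle, integral_withDensity_eq_integral_toReal_smul (by fun_prop) (by simp),
    intervalIntegral.integral_of_le (by linarith), ← integral_Icc_eq_integral_Ioc,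
    setIntegral_eq_integral_of_forall_compl_eq_zero, ← integral_const_mul]
  · refine integral_congr_ae (.of_forall fun x => ?_)
    simp only [ENNReal.toReal_ofReal (show 0 ≤ (2 * Real.pi * v)⁻¹ * Real.sqrt (4 * v - x ^ 2) by
      positivity), real_smul]
    push_cast
    ring
  · intro x hx
    have hsq : 4 * v - x ^ 2 ≤ 0 := by
      have hlt : 2 * Real.sqrt v < |x| := by
        by_contra! h
        exact hx (abs_le.1 h)
      nlinarith [Real.sq_sqrt hv, sq_abs x]
    rw [Real.sqrt_eq_zero_of_nonpos hsq, ofReal_zero, zero_mul]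

/-- **Cauchy transform of the semicircle law.** For `σ > 0` and `z` in the upper half-plane,
`∫ (x − z)⁻¹ dμ(x) = (1/(2σ²))((z−2σ)^{1/2}(z+2σ)^{1/2} − z)`, where `μ` is the semicircle
distribution with variance `σ²` and the square roots are principal. -/
theorem cauchyTransform_semicircle (σ : ℝ) (hσ : 0 < σ) (z : ℂ) (hz : 0 < z.im) :
    ∫ x : ℝ, ((x : ℂ) - z)⁻¹ ∂(semicircle (σ ^ 2))
      = (1 / (2 * (σ : ℂ) ^ 2)) *
          ((z - 2 * (σ : ℂ)) ^ ((1 : ℂ) / 2) * (z + 2 * (σ : ℂ)) ^ ((1 : ℂ) / 2) - z) := by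
  obtain ⟨har, hai⟩ := cpow_half_re_im_pos (w := z - 2 * (σ : ℂ)) (by simpa using hz)
  obtain ⟨hbr, hbi⟩ := cpow_half_re_im_pos (w := z + 2 * (σ : ℂ)) (by simpa using hz)
  have ha : ((z - 2 * (σ : ℂ)) ^ ((1 : ℂ) / 2)) ^ 2 = z - 2 * σ := by
    rw [one_div]
    exact cpow_nat_inv_pow _ two_ne_zero
  have hb : ((z + 2 * (σ : ℂ)) ^ ((1 : ℂ) / 2)) ^ 2 = z + 2 * σ := by
    rw [one_div]
    exact cpow_nat_inv_pow _ two_ne_zero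
  set a := (z - 2 * (σ : ℂ)) ^ ((1 : ℂ) / 2)
  set b := (z + 2 * (σ : ℂ)) ^ ((1 : ℂ) / 2)
  have hσ' : (σ : ℂ) ≠ 0 := ofReal_ne_zero.2 hσ.ne'
  have hpi : (Real.pi : ℂ) ≠ 0 := ofReal_ne_zero.2 Real.pi_ne_zero
  have hab : (a * b) ^ 2 = z ^ 2 - 4 * σ ^ 2 := by
    rw [mul_pow, ha, hb]
    ring
  have hlt := norm_half_sq_add_sq_sub_lt (a := a) (b := b) (by positivity)
  rw [show (a ^ 2 + b ^ 2) / 2 = z by rw [ha, hb]; ring] at hlt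
  obtain ⟨m, hm⟩ : ∃ m, m = (z - a * b) / (2 * σ) := ⟨_, rfl⟩
  have hinv : m * ((z + a * b) / (2 * σ)) = 1 := by
    rw [hm]
    field_simp
    linear_combination -hab
  have hm0 : m ≠ 0 := left_ne_zero_of_mul_eq_one hinv
  have hm1 : ‖m‖ < 1 := by
    have hlt' : ‖m‖ < ‖(z + a * b) / (2 * σ)‖ := by
      rw [hm, norm_div, norm_div]
      gcongr
      simpa using hσ.ne'
    have hnorm := congrArg norm hinv
    rw [norm_mul, norm_one] at hnorm
    nlinarith [norm_nonneg m]
  have hroot : σ * m ^ 2 - z * m + σ = 0 := by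
    rw [hm]
    field_simp
    linear_combination hab
  rw [integral_semicircle (sq_nonneg σ), Real.sqrt_sq hσ.le,
    integral_sqrt_mul_inv_sub_eq_integral_sin_sq_div hσ hz,
    integral_sin_sq_div hσ.ne' hm0 hm1 hroot, hm]
  push_cast
  field_simp
  ring
end

section
/- Let n ≥ 1, κ > 0, γ > 0, L ≥ 0 and v ≥ 0. Let Y and Z be random real symmetric n×n matrices on a probability space (Ω, F, P) such that for every pair (i,k), the entry difference Z_{ik} − Y_{ik} is a centered Gaussian random variable with variance at most (2κ/n)·v. Let λ_1(·) ≥ … ≥ λ_n(·) denote the ordered eigenvalues, and let f : ℝ → ℝ be L-Lipschitz. Then, with p = (γ+1)/γ, E[ | (1/n)∑_{i=1}^n f(λ_i(Z)) − (1/n)∑_{i=1}^n f(λ_i(Y)) |^{2p} ] ≤ C · L^{2p} · v^{p}, where C > 0 is a constant depending only on κ and γ. In particular, if v = |t₂ − t₁|^γ (the setting of hypothesis (H2)), the 2(γ+1)/γ-th moment is bounded by C L^{2(γ+1)/γ} |t₂ − t₁|^{γ+1}, which verifies Billingsley's tightness criterion with exponent q = γ+1 > 1. -/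
open MeasureTheory ProbabilityTheory Matrix

/-- The average `(1/n) ∑ f(λ_i(M))` of `f` over the eigenvalues of a symmetric matrix `M`
(defined as `0` if `M` is not symmetric). -/
noncomputable def specAvg {n : ℕ} (f : ℝ → ℝ) (M : Matrix (Fin n) (Fin n) ℝ) : ℝ :=
  if h : M.IsHermitian then (1 / (n : ℝ)) * ∑ i, f (h.eigenvalues i) else 0

lemma sum_sq_eq_trace {m : Type*} [Fintype m] (A : Matrix m m ℝ) :
    ∑ i, ∑ j, A i j ^ 2 = (A * Aᵀ).trace := by
  simp [Matrix.trace, Matrix.mul_apply, sq]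

lemma sum_sq_orthogonal_mul_mul {m : Type*} [Fintype m] [DecidableEq m]
    {U V : Matrix m m ℝ} (hU : U * Uᵀ = 1) (hV : V * Vᵀ = 1) (A : Matrix m m ℝ) :
    ∑ i, ∑ j, (Uᵀ * A * V) i j ^ 2 = ∑ i, ∑ j, A i j ^ 2 := by
  rw [sum_sq_eq_trace, sum_sq_eq_trace]
  have h : Uᵀ * A * V * (Uᵀ * A * V)ᵀ = Uᵀ * (A * (V * Vᵀ) * Aᵀ * U) := by
    simp only [Matrix.transpose_mul, Matrix.transpose_transpose, Matrix.mul_assoc]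
  rw [h, Matrix.trace_mul_comm, hV, Matrix.mul_one, Matrix.mul_assoc, hU, Matrix.mul_one]

lemma exists_orthogonal_diagonalization {m : Type*} [Fintype m] [DecidableEq m]
    {A : Matrix m m ℝ} (hA : A.IsHermitian) :
    ∃ U : Matrix m m ℝ, U * Uᵀ = 1 ∧ Uᵀ * U = 1 ∧ A = U * diagonal hA.eigenvalues * Uᵀ := by
  refine ⟨hA.eigenvectorUnitary, ?_, ?_, ?_⟩
  · simpa [Matrix.star_eq_conjTranspose] using Unitary.mul_star_self_of_mem hA.eigenvectorUnitary.2
  · simpa [Matrix.star_eq_conjTranspose] using Unitary.star_mul_self_of_mem hA.eigenvectorUnitary.2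
  · have h := hA.spectral_theorem
    rw [Unitary.conjStarAlgAut_apply] at h
    simpa [Matrix.star_eq_conjTranspose, Function.comp_def] using h

/-- The squared overlaps of two orthonormal eigenbases form a doubly stochastic coupling of the
two spectra whose quadratic transport cost is the squared Frobenius distance. -/
lemma exists_doublyStochastic_coupling_eigenvalues {m : Type*} [Fintype m] [DecidableEq m]
    {A B : Matrix m m ℝ} (hA : A.IsHermitian) (hB : B.IsHermitian) :
    ∃ D : m → m → ℝ, (∀ i j, 0 ≤ D i j) ∧ (∀ i, ∑ j, D i j = 1) ∧ (∀ j, ∑ i, D i j = 1) ∧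
      ∑ i, ∑ j, D i j * (hA.eigenvalues i - hB.eigenvalues j) ^ 2
        = ∑ i, ∑ j, (A i j - B i j) ^ 2 := by
  obtain ⟨U, hU, hU', hUA⟩ := exists_orthogonal_diagonalization hA
  obtain ⟨V, hV, hV', hVB⟩ := exists_orthogonal_diagonalization hB
  refine ⟨fun i j => (Uᵀ * V) i j ^ 2, fun i j => sq_nonneg _, fun i => ?_, fun j => ?_, ?_⟩
  · have h : (Uᵀ * V) * (Uᵀ * V)ᵀ = 1 := by
      rw [Matrix.transpose_mul, Matrix.transpose_transpose, Matrix.mul_assoc,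
        ← Matrix.mul_assoc V, hV, Matrix.one_mul, hU']
    have h' := congrFun (congrFun h i) i
    rw [Matrix.mul_apply, Matrix.one_apply_eq] at h'
    simpa only [Matrix.transpose_apply (Uᵀ * V), ← sq] using h'
  · have h : (Uᵀ * V)ᵀ * (Uᵀ * V) = 1 := by
      rw [Matrix.transpose_mul, Matrix.transpose_transpose, Matrix.mul_assoc,
        ← Matrix.mul_assoc U, hU, Matrix.one_mul, hV']
    have h' := congrFun (congrFun h j) j
    rw [Matrix.mul_apply, Matrix.one_apply_eq] at h'
    simpa only [Matrix.transpose_apply (Uᵀ * V), ← sq] using h'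
  · have h : Uᵀ * (A - B) * V
        = diagonal hA.eigenvalues * (Uᵀ * V) - Uᵀ * V * diagonal hB.eigenvalues := by
      rw [Matrix.mul_sub, Matrix.sub_mul]
      conv_lhs => rw [hUA, hVB]
      congr 1
      · rw [← Matrix.mul_assoc, ← Matrix.mul_assoc, hU', Matrix.one_mul, Matrix.mul_assoc]
      · rw [Matrix.mul_assoc, Matrix.mul_assoc _ Vᵀ, hV', Matrix.mul_one, Matrix.mul_assoc]
    have h2 := sum_sq_orthogonal_mul_mul hU hV (A - B)
    rw [h] at h2
    simp only [Matrix.sub_apply] at h2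
    rw [← h2]
    refine Finset.sum_congr rfl fun i _ => Finset.sum_congr rfl fun j _ => ?_
    rw [Matrix.diagonal_mul, Matrix.mul_diagonal]
    ring

lemma sq_sum_eigenvalues_sub_le {m : Type*} [Fintype m] [DecidableEq m]
    {A B : Matrix m m ℝ} (hA : A.IsHermitian) (hB : B.IsHermitian) {L : ℝ} {f : ℝ → ℝ}
    (hf : ∀ x y : ℝ, |f x - f y| ≤ L * |x - y|) :
    (∑ i, f (hA.eigenvalues i) - ∑ i, f (hB.eigenvalues i)) ^ 2
      ≤ L ^ 2 * Fintype.card m * ∑ i, ∑ j, (A i j - B i j) ^ 2 := by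
  obtain ⟨D, hD, hrow, hcol, hcost⟩ := exists_doublyStochastic_coupling_eigenvalues hA hB
  have hdiff : ∑ i, f (hA.eigenvalues i) - ∑ i, f (hB.eigenvalues i)
      = ∑ i, ∑ j, D i j * (f (hA.eigenvalues i) - f (hB.eigenvalues j)) := by
    simp only [mul_sub, Finset.sum_sub_distrib, ← Finset.sum_mul, hrow, one_mul]
    rw [Finset.sum_comm (f := fun i j => D i j * _)]
    simp only [← Finset.sum_mul, hcol, one_mul]
  have hmass : ∑ i, ∑ j, D i j = Fintype.card m := by simp [hrow]
  rw [hdiff, ← hcost, ← hmass]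
  simp only [← Fintype.sum_prod_type']
  rw [mul_right_comm, mul_comm, Finset.mul_sum]
  refine Finset.sum_sq_le_sum_mul_sum_of_sq_le_mul _ (fun x _ => hD _ _)
    (fun x _ => mul_nonneg (sq_nonneg _) (mul_nonneg (hD _ _) (sq_nonneg _))) fun x _ => ?_
  have h := pow_le_pow_left₀ (abs_nonneg _)
    (hf (hA.eigenvalues x.1) (hB.eigenvalues x.2)) 2
  rw [mul_pow, sq_abs, sq_abs] at h
  calc _ = D x.1 x.2 ^ 2 * (f (hA.eigenvalues x.1) - f (hB.eigenvalues x.2)) ^ 2 := by ring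
    _ ≤ D x.1 x.2 ^ 2 * (L ^ 2 * (hA.eigenvalues x.1 - hB.eigenvalues x.2) ^ 2) := by gcongr
    _ = _ := by ring


lemma lintegral_abs_rpow_gaussianReal_ne_top {q : ℝ} (hq : 0 < q) :
    ∫⁻ x, ENNReal.ofReal (|x| ^ q) ∂(gaussianReal 0 1) ≠ ⊤ := by
  have h := lintegral_rpow_enorm_lt_top_of_eLpNorm_lt_top (p := ENNReal.ofReal q)
    (by simpa using hq) ENNReal.ofReal_ne_top
    (memLp_id_gaussianReal' (μ := 0) (v := 1) _ ENNReal.ofReal_ne_top).2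
  rw [ENNReal.toReal_ofReal hq.le] at h
  refine ne_of_eq_of_ne (lintegral_congr fun x => ?_) h.ne
  rw [id, Real.enorm_eq_ofReal_abs, ENNReal.ofReal_rpow_of_nonneg (abs_nonneg x) hq.le]

lemma lintegral_abs_rpow_gaussianReal_zero (s : NNReal) (p : ℝ) :
    ∫⁻ x, ENNReal.ofReal (|x| ^ (2 * p)) ∂(gaussianReal 0 s)
      = ENNReal.ofReal ((s : ℝ) ^ p)
        * ∫⁻ x, ENNReal.ofReal (|x| ^ (2 * p)) ∂(gaussianReal 0 1) := by
  have hs : gaussianReal 0 s = (gaussianReal 0 1).map (√(s : ℝ) * ·) := by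
    rw [gaussianReal_map_const_mul, mul_zero, mul_one]
    congr 1
    ext
    simp
  rw [hs, lintegral_map (by fun_prop) (by fun_prop), ← lintegral_const_mul _ (by fun_prop)]
  refine lintegral_congr fun x => ?_
  rw [← ENNReal.ofReal_mul (by positivity), abs_mul, abs_of_nonneg (Real.sqrt_nonneg _),
    Real.mul_rpow (Real.sqrt_nonneg _) (abs_nonneg x), Real.rpow_mul (Real.sqrt_nonneg _),
    Real.rpow_two, Real.sq_sqrt s.coe_nonneg]

lemma aemeasurable_of_map_eq_gaussianReal {Ω : Type*} [MeasurableSpace Ω] {P : Measure Ω}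
    {X : Ω → ℝ} {μ : ℝ} {s : NNReal} (hX : P.map X = gaussianReal μ s) : AEMeasurable X P := by
  refine AEMeasurable.of_map_ne_zero ?_
  rw [hX]
  exact IsProbabilityMeasure.ne_zero _

lemma lintegral_abs_rpow_le_of_map_eq_gaussianReal {Ω : Type*} [MeasurableSpace Ω]
    {P : Measure Ω} {X : Ω → ℝ} {s : NNReal} (hX : P.map X = gaussianReal 0 s) {a p : ℝ}
    (hs : (s : ℝ) ≤ a) (hp : 0 ≤ p) :
    ∫⁻ ω, ENNReal.ofReal (|X ω| ^ (2 * p)) ∂P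
      ≤ ENNReal.ofReal (a ^ p) * ∫⁻ x, ENNReal.ofReal (|x| ^ (2 * p)) ∂(gaussianReal 0 1) := by
  rw [← lintegral_map' (f := fun x : ℝ => ENNReal.ofReal (|x| ^ (2 * p))) (by fun_prop)
    (aemeasurable_of_map_eq_gaussianReal hX), hX, lintegral_abs_rpow_gaussianReal_zero]
  gcongr

lemma sq_specAvg_sub_le {n : ℕ} (hn : 1 ≤ n) {A B : Matrix (Fin n) (Fin n) ℝ}
    (hA : A.IsHermitian) (hB : B.IsHermitian) {L : ℝ} {f : ℝ → ℝ}
    (hf : ∀ x y : ℝ, |f x - f y| ≤ L * |x - y|) :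
    (specAvg f A - specAvg f B) ^ 2 ≤ L ^ 2 / n * ∑ i, ∑ j, (A i j - B i j) ^ 2 := by
  have hn' : (0 : ℝ) < n := by exact_mod_cast hn
  have h := sq_sum_eigenvalues_sub_le hA hB hf
  rw [Fintype.card_fin] at h
  rw [specAvg, specAvg, dif_pos hA, dif_pos hB, ← mul_sub, mul_pow]
  calc _ ≤ (1 / (n : ℝ)) ^ 2 * (L ^ 2 * n * ∑ i, ∑ j, (A i j - B i j) ^ 2) := by gcongr
    _ = _ := by field_simp

lemma abs_specAvg_sub_rpow_le {n : ℕ} (hn : 1 ≤ n) {A B : Matrix (Fin n) (Fin n) ℝ}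
    (hA : A.IsHermitian) (hB : B.IsHermitian) {L : ℝ} {f : ℝ → ℝ}
    (hf : ∀ x y : ℝ, |f x - f y| ≤ L * |x - y|) {p : ℝ} (hp : 1 ≤ p) :
    |specAvg f A - specAvg f B| ^ (2 * p)
      ≤ (L ^ 2 / n) ^ p * ((n : ℝ) * n) ^ (p - 1)
        * ∑ x : Fin n × Fin n, |A x.1 x.2 - B x.1 x.2| ^ (2 * p) := by
  have hsq (a : ℝ) : |a| ^ (2 * p) = (a ^ 2) ^ p := by
    rw [Real.rpow_mul (abs_nonneg a), Real.rpow_two, sq_abs]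
  have hsum := Real.rpow_sum_le_const_mul_sum_rpow_of_nonneg Finset.univ
    (f := fun x : Fin n × Fin n => (A x.1 x.2 - B x.1 x.2) ^ 2) hp fun _ _ => sq_nonneg _
  simp only [Finset.card_univ, Fintype.card_prod, Fintype.card_fin, Nat.cast_mul] at hsum
  simp only [hsq]
  calc _ ≤ (L ^ 2 / n * ∑ i, ∑ j, (A i j - B i j) ^ 2) ^ p := by
        gcongr
        exact sq_specAvg_sub_le hn hA hB hf
    _ = (L ^ 2 / n) ^ p * (∑ x : Fin n × Fin n, (A x.1 x.2 - B x.1 x.2) ^ 2) ^ p := by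
        rw [Real.mul_rpow (by positivity) (by positivity), Fintype.sum_prod_type]
    _ ≤ _ := by
        rw [mul_assoc]
        gcongr

lemma rpow_dimension_cancel {n κ v L p : ℝ} (hn : 0 < n) (hκ : 0 ≤ κ) (hv : 0 ≤ v)
    (hL : 0 ≤ L) :
    (L ^ 2 / n) ^ p * (n * n) ^ (p - 1) * (n * n * (2 * κ / n * v) ^ p)
      = (2 * κ) ^ p * L ^ (2 * p) * v ^ p := by
  have hpow : (n * n) ^ (p - 1) * (n * n) = n ^ p * n ^ p := by
    rw [← Real.rpow_add_one (by positivity), sub_add_cancel, Real.mul_rpow hn.le hn.le]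
  have hn0 : n ^ p ≠ 0 := (Real.rpow_pos_of_pos hn p).ne'
  rw [Real.div_rpow (by positivity) hn.le, Real.mul_rpow (by positivity) hv,
    Real.div_rpow (by positivity) hn.le, Real.rpow_mul hL, Real.rpow_two]
  calc _ = (L ^ 2) ^ p / n ^ p * ((n * n) ^ (p - 1) * (n * n))
        * ((2 * κ) ^ p / n ^ p * v ^ p) := by ring
    _ = _ := by
      rw [hpow]
      field_simp

/-- **Moment bound for eigenvalue linear statistics of Gaussian perturbations.** There is a
constant `C > 0` depending only on `κ, γ > 0` such that for any `n ≥ 1`, any random real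
symmetric `n × n` matrices `Y`, `Z` whose entrywise differences `Z_{ik} − Y_{ik}` are centered
Gaussian with variance at most `(2κ/n)v`, and any `L`-Lipschitz `f : ℝ → ℝ`, with
`p = (γ+1)/γ` one has `E[|⟨μ^Z, f⟩ − ⟨μ^Y, f⟩|^{2p}] ≤ C L^{2p} v^p`. -/
theorem eigenvalue_statistic_increment_moment_bound
    (κ γ : ℝ) (hκ : 0 < κ) (hγ : 0 < γ) :
    ∃ C > (0 : ℝ), ∀ (n : ℕ), 1 ≤ n →
      ∀ (Ω : Type) (mΩ : MeasurableSpace Ω) (P : Measure Ω), IsProbabilityMeasure P →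
      ∀ (Y Z : Ω → Matrix (Fin n) (Fin n) ℝ),
        (∀ ω, (Y ω).IsHermitian) → (∀ ω, (Z ω).IsHermitian) →
        ∀ v : ℝ, 0 ≤ v →
        (∀ i k : Fin n, ∃ s : NNReal, (s : ℝ) ≤ 2 * κ / n * v ∧
            Measure.map (fun ω => Z ω i k - Y ω i k) P = gaussianReal 0 s) →
        ∀ (L : ℝ) (f : ℝ → ℝ), 0 ≤ L → (∀ x y : ℝ, |f x - f y| ≤ L * |x - y|) →
        ∫⁻ ω, ENNReal.ofReal
            (|specAvg f (Z ω) - specAvg f (Y ω)| ^ (2 * ((γ + 1) / γ))) ∂P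
          ≤ ENNReal.ofReal (C * L ^ (2 * ((γ + 1) / γ)) * v ^ ((γ + 1) / γ)) := by
  set p : ℝ := (γ + 1) / γ with hp_def
  have hp : 1 ≤ p := by
    rw [hp_def, one_le_div hγ]
    linarith
  set M := ∫⁻ x, ENNReal.ofReal (|x| ^ (2 * p)) ∂(gaussianReal 0 1)
  have hM : M ≠ ⊤ := lintegral_abs_rpow_gaussianReal_ne_top (by linarith)
  refine ⟨(2 * κ) ^ p * (M.toReal + 1), by positivity, ?_⟩
  intro n hn Ω mΩ P _ Y Z hY hZ v hv hgauss L f hL hf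
  choose s hs hmap using hgauss
  have hn' : (0 : ℝ) < n := by exact_mod_cast hn
  set K : ℝ := (L ^ 2 / n) ^ p * ((n : ℝ) * n) ^ (p - 1)
  have hK : 0 ≤ K := by positivity
  calc _ ≤ ∫⁻ ω, ENNReal.ofReal K * ∑ x : Fin n × Fin n,
          ENNReal.ofReal (|Z ω x.1 x.2 - Y ω x.1 x.2| ^ (2 * p)) ∂P := by
        refine lintegral_mono fun ω => ?_
        rw [← ENNReal.ofReal_sum_of_nonneg fun _ _ => by positivity, ← ENNReal.ofReal_mul hK]
        exact ENNReal.ofReal_le_ofReal (abs_specAvg_sub_rpow_le hn (hZ ω) (hY ω) hf hp)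
    _ = ENNReal.ofReal K * ∑ x : Fin n × Fin n,
          ∫⁻ ω, ENNReal.ofReal (|Z ω x.1 x.2 - Y ω x.1 x.2| ^ (2 * p)) ∂P := by
        have hmeas (x : Fin n × Fin n) :
            AEMeasurable (fun ω => ENNReal.ofReal (|Z ω x.1 x.2 - Y ω x.1 x.2| ^ (2 * p))) P := by
          have h := aemeasurable_of_map_eq_gaussianReal (hmap x.1 x.2)
          exact Measurable.comp_aemeasurable
            (g := fun y : ℝ => ENNReal.ofReal (|y| ^ (2 * p))) (by fun_prop) h
        rw [lintegral_const_mul' _ _ ENNReal.ofReal_ne_top,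
          lintegral_finsetSum' _ fun x _ => hmeas x]
    _ ≤ ENNReal.ofReal K * ∑ _x : Fin n × Fin n,
          ENNReal.ofReal ((2 * κ / n * v) ^ p) * ENNReal.ofReal (M.toReal + 1) := by
        gcongr with x
        refine (lintegral_abs_rpow_le_of_map_eq_gaussianReal (hmap x.1 x.2) (hs x.1 x.2)
          (by linarith)).trans ?_
        gcongr
        exact (ENNReal.ofReal_toReal hM).symm.le.trans
          (ENNReal.ofReal_le_ofReal (by linarith))
    _ = ENNReal.ofReal (K * (n * n * (2 * κ / n * v) ^ p) * (M.toReal + 1)) := by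
        have hnn : ((n * n : ℕ) : ENNReal) = ENNReal.ofReal ((n : ℝ) * n) := by
          rw [← Nat.cast_mul, ENNReal.ofReal_natCast]
        rw [Finset.sum_const, Finset.card_univ, Fintype.card_prod, Fintype.card_fin,
          nsmul_eq_mul, hnn, ← ENNReal.ofReal_mul (by positivity),
          ← ENNReal.ofReal_mul (by positivity), ← ENNReal.ofReal_mul hK]
        congr 1
        ring
    _ = _ := by
        rw [rpow_dimension_cancel hn' hκ.le hv hL]
        congr 1
        ring
end

section
/- Let n ≥ 1 and let A, B be real symmetric n×n matrices with eigenvalues λ_1(A) ≥ … ≥ λ_n(A) and λ_1(B) ≥ … ≥ λ_n(B) listed in decreasing order with multiplicity. Let f : ℝ → ℝ be L-Lipschitz. Then | (1/n)∑_{i=1}^n f(λ_i(A)) − (1/n)∑_{i=1}^n f(λ_i(B)) | ≤ L · ( (1/n) ∑_{i,k=1}^n (A_{ik} − B_{ik})² )^{1/2}. -/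
open Matrix

section FrobeniusInvariance

variable {ι : Type*} [Fintype ι]

lemma sum_sq_eq_trace_star_mul_self (M : Matrix ι ι ℝ) :
    ∑ i, ∑ j, M i j ^ 2 = (star M * M).trace := by
  rw [Finset.sum_comm]
  simp [Matrix.trace, Matrix.mul_apply, Matrix.star_apply, sq]

variable [DecidableEq ι]

lemma sum_sq_star_unitary_mul_mul_unitary (U V : unitaryGroup ι ℝ) (M : Matrix ι ι ℝ) :
    ∑ i, ∑ j, (star (U : Matrix ι ι ℝ) * M * (V : Matrix ι ι ℝ)) i j ^ 2
      = ∑ i, ∑ j, M i j ^ 2 := by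
  have hU : (U : Matrix ι ι ℝ) * star (U : Matrix ι ι ℝ) = 1 := Unitary.coe_mul_star_self U
  have hV : (V : Matrix ι ι ℝ) * star (V : Matrix ι ι ℝ) = 1 := Unitary.coe_mul_star_self V
  rw [sum_sq_eq_trace_star_mul_self, sum_sq_eq_trace_star_mul_self]
  calc _ = (star (V : Matrix ι ι ℝ) * (star M * ((U : Matrix ι ι ℝ) * star (U : Matrix ι ι ℝ)) * M
            * (V : Matrix ι ι ℝ))).trace := by
        simp only [star_mul, star_star, mul_assoc]
    _ = _ := by
        rw [hU, Matrix.trace_mul_comm, mul_assoc, hV, mul_one, mul_one]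

lemma sum_sq_row_unitary (W : unitaryGroup ι ℝ) (i : ι) :
    ∑ j, (W : Matrix ι ι ℝ) i j ^ 2 = 1 := by
  have h := congrFun (congrFun (Unitary.coe_mul_star_self W) i) i
  simpa [Matrix.mul_apply, Matrix.star_apply, sq] using h

lemma sum_sq_col_unitary (W : unitaryGroup ι ℝ) (j : ι) :
    ∑ i, (W : Matrix ι ι ℝ) i j ^ 2 = 1 := by
  have h := congrFun (congrFun (Unitary.coe_star_mul_self W) j) j
  simpa [Matrix.mul_apply, Matrix.star_apply, sq] using h

/-- The squared Frobenius distance of two symmetric matrices is the transport cost between their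
spectra for the coupling given by the squared overlaps of the eigenvectors. -/
lemma sum_overlap_mul_sub_eigenvalues_sq {A B : Matrix ι ι ℝ}
    (hA : A.IsHermitian) (hB : B.IsHermitian) :
    ∑ i, ∑ j, ((star hA.eigenvectorUnitary * hB.eigenvectorUnitary : unitaryGroup ι ℝ) :
        Matrix ι ι ℝ) i j ^ 2 * (hA.eigenvalues i - hB.eigenvalues j) ^ 2
      = ∑ i, ∑ j, (A i j - B i j) ^ 2 := by
  have hdiagA : star (hA.eigenvectorUnitary : Matrix ι ι ℝ) * A
      = diagonal hA.eigenvalues * star (hA.eigenvectorUnitary : Matrix ι ι ℝ) := by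
    conv_lhs => rhs; rw [hA.spectral_theorem, Unitary.conjStarAlgAut_apply]
    rw [← mul_assoc, ← mul_assoc, Unitary.coe_star_mul_self, one_mul]
    rfl
  have hdiagB : B * (hB.eigenvectorUnitary : Matrix ι ι ℝ)
      = (hB.eigenvectorUnitary : Matrix ι ι ℝ) * diagonal hB.eigenvalues := by
    conv_lhs => lhs; rw [hB.spectral_theorem, Unitary.conjStarAlgAut_apply]
    rw [mul_assoc, Unitary.coe_star_mul_self, mul_one]
    rfl
  have h := sum_sq_star_unitary_mul_mul_unitary hA.eigenvectorUnitary hB.eigenvectorUnitary (A - B)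
  simp only [Matrix.sub_apply] at h
  rw [← h, mul_sub, sub_mul, hdiagA, mul_assoc _ B, hdiagB, mul_assoc, ← mul_assoc _ _ (diagonal _)]
  refine Finset.sum_congr rfl fun i _ => Finset.sum_congr rfl fun j _ => ?_
  rw [Matrix.sub_apply, diagonal_mul, mul_diagonal]
  simp only [Submonoid.coe_mul, Unitary.coe_star]
  ring

end FrobeniusInvariance

/-- If `p` has all row and column sums equal to one, a Lipschitz observable averages over `a` and
`b` with a difference controlled by the quadratic cost of the coupling `p`. -/
lemma abs_sum_sub_sum_le_of_coupling {ι : Type*} [Fintype ι] {p : ι → ι → ℝ}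
    (hp : ∀ i j, 0 ≤ p i j) (hrow : ∀ i, ∑ j, p i j = 1) (hcol : ∀ j, ∑ i, p i j = 1)
    (a b : ι → ℝ) {f : ℝ → ℝ} {L : ℝ} (hL : 0 ≤ L)
    (hf : ∀ x y : ℝ, |f x - f y| ≤ L * |x - y|) :
    |∑ i, f (a i) - ∑ i, f (b i)|
      ≤ L * √(Fintype.card ι * ∑ i, ∑ j, p i j * (a i - b j) ^ 2) := by
  have hdiff : ∑ i, f (a i) - ∑ i, f (b i) = ∑ i, ∑ j, p i j * (f (a i) - f (b j)) := by
    simp only [mul_sub, Finset.sum_sub_distrib]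
    rw [Finset.sum_comm (f := fun i j => p i j * f (b j))]
    simp only [← Finset.sum_mul, hrow, hcol, one_mul]
  have hlip : |∑ i, ∑ j, p i j * (f (a i) - f (b j))| ≤ L * ∑ i, ∑ j, p i j * |a i - b j| := by
    rw [Finset.mul_sum]
    refine (Finset.abs_sum_le_sum_abs _ _).trans (Finset.sum_le_sum fun i _ => ?_)
    rw [Finset.mul_sum]
    refine (Finset.abs_sum_le_sum_abs _ _).trans (Finset.sum_le_sum fun j _ => ?_)
    rw [abs_mul, abs_of_nonneg (hp i j), mul_left_comm]
    exact mul_le_mul_of_nonneg_left (hf _ _) (hp i j)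
  have hcs : (∑ i, ∑ j, p i j * |a i - b j|) ^ 2
      ≤ Fintype.card ι * ∑ i, ∑ j, p i j * (a i - b j) ^ 2 := by
    have hmass : ∑ x : ι × ι, p x.1 x.2 = Fintype.card ι := by
      simp [Fintype.sum_prod_type, hrow]
    rw [← hmass, ← Fintype.sum_prod_type' (f := fun i j => p i j * |a i - b j|),
      ← Fintype.sum_prod_type' (f := fun i j => p i j * (a i - b j) ^ 2)]
    refine Finset.sum_sq_le_sum_mul_sum_of_sq_le_mul _ (fun x _ => hp _ _)
      (fun x _ => mul_nonneg (hp _ _) (sq_nonneg _)) fun x _ => ?_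
    rw [mul_pow, sq_abs]
    exact le_of_eq (by ring)
  rw [hdiff]
  exact hlip.trans (mul_le_mul_of_nonneg_left (Real.le_sqrt_of_sq_le hcs) hL)

/-- **Hoffman–Wielandt corollary.** For real symmetric `n × n` matrices `A`, `B` and an
`L`-Lipschitz function `f : ℝ → ℝ`, the averages of `f` over the eigenvalues (listed with
multiplicity) differ by at most `L · ((1/n) ∑_{i,k} (A_{ik} − B_{ik})²)^{1/2}`. -/
theorem averaged_lipschitz_eigenvalue_bound
    (n : ℕ) (hn : 1 ≤ n) (A B : Matrix (Fin n) (Fin n) ℝ)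
    (hA : A.IsHermitian) (hB : B.IsHermitian)
    (f : ℝ → ℝ) (L : ℝ) (hf : ∀ x y : ℝ, |f x - f y| ≤ L * |x - y|) :
    |(1 / (n : ℝ)) * ∑ i, f (hA.eigenvalues i) - (1 / (n : ℝ)) * ∑ i, f (hB.eigenvalues i)|
      ≤ L * Real.sqrt ((1 / (n : ℝ)) * ∑ i : Fin n, ∑ k : Fin n, (A i k - B i k) ^ 2) := by
  have hL : 0 ≤ L := by simpa using (abs_nonneg _).trans (hf 1 0)
  have hn_pos : (0 : ℝ) < n := by exact_mod_cast hn
  have h := abs_sum_sub_sum_le_of_coupling (fun _ _ => sq_nonneg _)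
    (sum_sq_row_unitary (star hA.eigenvectorUnitary * hB.eigenvectorUnitary))
    (sum_sq_col_unitary (star hA.eigenvectorUnitary * hB.eigenvectorUnitary))
    hA.eigenvalues hB.eigenvalues hL hf
  rw [sum_overlap_mul_sub_eigenvalues_sq hA hB, Fintype.card_fin] at h
  set S := ∑ i : Fin n, ∑ k : Fin n, (A i k - B i k) ^ 2
  have hsqrt : √(1 / (n : ℝ) * S) = 1 / n * √(n * S) := by
    rw [show 1 / (n : ℝ) * S = (1 / n) ^ 2 * (n * S) by field_simp,
      Real.sqrt_mul (sq_nonneg _), Real.sqrt_sq (by positivity)]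
  rw [← mul_sub, abs_mul, abs_of_pos (by positivity : 0 < 1 / (n : ℝ)), hsqrt, mul_left_comm]
  exact mul_le_mul_of_nonneg_left h (by positivity)
end

section
/- Let d ≥ 1, j ∈ {1,…,d}, and let M ⊂ ℝ^d be a Borel set of Lebesgue measure zero such that its projection γ_j(M) onto the hyperplane P_j = {x ∈ ℝ^d : x_j = 0} has (d−1)-dimensional Lebesgue measure zero. Let D = ℝ^d ∖ M, and let F : ℝ^d → ℝ be a measurable function that is continuously differentiable on D and satisfies the polynomial growth bound |F(x)| + |∂F/∂x_j(x)| ≤ C(1 + |x|^N) for all x ∈ D, for some constants C, N > 0. Then for every Schwartz function φ : ℝ^d → ℝ, ∫_{ℝ^d} 1_D(x) (∂F/∂x_j)(x) φ(x) dx = − ∫_{ℝ^d} 1_D(x) F(x) (∂φ/∂x_j)(x) dx. -/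
open MeasureTheory

/-- Insert `t` as the `j`-th coordinate of a vector `y` indexed by the other coordinates. -/
def insertCoord {ι : Type*} [DecidableEq ι] (j : ι) (y : {i : ι // i ≠ j} → ℝ) (t : ℝ) : ι → ℝ :=
  fun i => if h : i = j then t else y ⟨i, h⟩

section InsertCoord

variable {ι : Type*} [DecidableEq ι]

theorem hasDerivAt_insertCoord (j : ι) (y : {i : ι // i ≠ j} → ℝ) (t : ℝ) :
    HasDerivAt (insertCoord j y) (Pi.single j 1) t := by
  rw [hasDerivAt_pi]
  intro i
  by_cases h : i = j
  · subst h
    simpa [insertCoord] using hasDerivAt_id' t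
  · simpa [insertCoord, h] using hasDerivAt_const t (y ⟨i, h⟩)

variable [Fintype ι]

theorem insertCoord_measurePreserving (j : ι) :
    ∃ e : ({i : ι // i ≠ j} → ℝ) × ℝ ≃ᵐ (ι → ℝ),
      (∀ p, e p = insertCoord j p.1 p.2) ∧ MeasurePreserving e := by
  let e₁ : (({i : ι // i = j} → ℝ) × ({i : ι // i ≠ j} → ℝ)) ≃ᵐ (ι → ℝ) :=
    (MeasurableEquiv.piEquivPiSubtypeProd (fun _ : ι => ℝ) (fun i => i = j)).symm
  have h₁ : MeasurePreserving e₁ := by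
    convert! (volume_preserving_piEquivPiSubtypeProd (fun _ : ι => ℝ) (fun i => i = j)).symm _
  let e₂ : ℝ ≃ᵐ ({i : ι // i = j} → ℝ) :=
    (MeasurableEquiv.funUnique {i : ι // i = j} ℝ).symm
  have h₂ : MeasurePreserving e₂ := (volume_preserving_funUnique {i : ι // i = j} ℝ).symm _
  refine ⟨(MeasurableEquiv.prodComm.trans
    (MeasurableEquiv.prodCongr e₂ (MeasurableEquiv.refl _))).trans e₁, ?_, ?_⟩
  · rintro ⟨y, t⟩
    rfl
  · have h₃ : MeasurePreserving
        (Prod.map e₂ (id : ({i : ι // i ≠ j} → ℝ) → ({i : ι // i ≠ j} → ℝ))) :=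
      h₂.prod (MeasurePreserving.id volume)
    exact h₁.comp (h₃.comp Measure.measurePreserving_swap)

/-- Integration by parts in the `j`-th coordinate, assuming differentiability along almost every
line in that direction. -/
theorem integral_mul_eq_neg_of_ae_hasDerivAt_insertCoord (j : ι) {f f' g g' : (ι → ℝ) → ℝ}
    (hf : ∀ᵐ y : {i : ι // i ≠ j} → ℝ, ∀ t,
      HasDerivAt (fun s => f (insertCoord j y s)) (f' (insertCoord j y t)) t)
    (hg : ∀ᵐ y : {i : ι // i ≠ j} → ℝ, ∀ t,
      HasDerivAt (fun s => g (insertCoord j y s)) (g' (insertCoord j y t)) t)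
    (hfg' : Integrable fun x => f x * g' x) (hf'g : Integrable fun x => f' x * g x)
    (hfg : Integrable fun x => f x * g x) :
    ∫ x, f' x * g x = - ∫ x, f x * g' x := by
  obtain ⟨e, he, hpres⟩ := insertCoord_measurePreserving j
  have comp : ∀ {h : (ι → ℝ) → ℝ}, Integrable h → Integrable
      (fun p : ({i : ι // i ≠ j} → ℝ) × ℝ => h (insertCoord j p.1 p.2)) := by
    intro h hh
    simpa only [Function.comp_def, he] using (hpres.integrable_comp_emb e.measurableEmbedding).2 hh
  have hint : ∀ {h : (ι → ℝ) → ℝ}, Integrable h →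
      ∫ x, h x = ∫ y : {i : ι // i ≠ j} → ℝ, ∫ t : ℝ, h (insertCoord j y t) := by
    intro h hh
    rw [← hpres.integral_comp e.measurableEmbedding]
    simp only [he]
    exact integral_prod _ (comp hh)
  rw [hint hfg', hint hf'g, ← integral_neg]
  refine integral_congr_ae ?_
  filter_upwards [hf, hg, (comp hfg').prod_right_ae, (comp hf'g).prod_right_ae,
    (comp hfg).prod_right_ae] with y hfy hgy h₁ h₂ h₃
  rw [integral_mul_deriv_eq_deriv_mul_of_integrable (fun t _ => hfy t) (fun t _ => hgy t)
    h₁ h₂ h₃, neg_neg]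

end InsertCoord

/-- A measurable function of polynomial growth times a Schwartz function is integrable. -/
theorem SchwartzMap.integrable_mul_of_polynomial_growth {E : Type*} [NormedAddCommGroup E]
    [NormedSpace ℝ E] [MeasurableSpace E] [BorelSpace E] [SecondCountableTopology E]
    {μ : Measure E} [μ.HasTemperateGrowth] (ψ : SchwartzMap E ℝ) {G : E → ℝ}
    (hG : AEStronglyMeasurable G μ) {C : ℝ} {N : ℕ} (hbound : ∀ᵐ x ∂μ, |G x| ≤ C * (1 + ‖x‖ ^ N)) :
    Integrable (fun x => G x * ψ x) μ := by
  have hint : Integrable (fun x => C * (‖x‖ ^ 0 * ‖ψ x‖ + ‖x‖ ^ N * ‖ψ x‖)) μ :=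
    ((ψ.integrable_pow_mul μ 0).add (ψ.integrable_pow_mul μ N)).const_mul C
  refine hint.mono' (hG.mul ψ.continuous.aestronglyMeasurable) ?_
  filter_upwards [hbound] with x hx
  rw [norm_mul, Real.norm_eq_abs]
  calc |G x| * ‖ψ x‖ ≤ C * (1 + ‖x‖ ^ N) * ‖ψ x‖ := by gcongr
    _ = C * (‖x‖ ^ 0 * ‖ψ x‖ + ‖x‖ ^ N * ‖ψ x‖) := by ring

/-- **Integration by parts off a null set.** Let `M ⊆ ℝ^d` be a Borel null set whose projection
onto the hyperplane `{x_j = 0}` is null for `(d−1)`-dimensional Lebesgue measure, let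
`D = ℝ^d ∖ M`, and let `F` be measurable, continuously differentiable on `D`, with `F` and
`∂F/∂x_j` of polynomial growth on `D`. Then for every Schwartz function `φ`,
`∫ 1_D ∂F/∂x_j · φ = − ∫ 1_D F · ∂φ/∂x_j`. -/
theorem integration_by_parts_off_null_set
    (d : ℕ) (hd : 1 ≤ d) (j : Fin d)
    (M : Set (Fin d → ℝ)) (hMmeas : MeasurableSet M) (hM0 : volume M = 0)
    (hproj : volume {y : {i : Fin d // i ≠ j} → ℝ |
        ∃ t : ℝ, (fun i : Fin d => if h : i = j then t else y ⟨i, h⟩) ∈ M} = 0)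
    (F : (Fin d → ℝ) → ℝ) (hFmeas : Measurable F)
    (hFdiff : ∀ x ∈ Mᶜ, DifferentiableAt ℝ F x)
    (hFC1 : ContinuousOn (fderiv ℝ F) Mᶜ)
    (C : ℝ) (hC : 0 < C) (N : ℕ) (hN : 0 < N)
    (hgrowth : ∀ x ∈ Mᶜ, |F x| + |fderiv ℝ F x (Pi.single j 1)| ≤ C * (1 + ‖x‖ ^ N))
    (φ : SchwartzMap (Fin d → ℝ) ℝ) :
    ∫ x, Set.indicator Mᶜ (fun x => fderiv ℝ F x (Pi.single j 1)) x * φ x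
      = - ∫ x, Set.indicator Mᶜ F x * fderiv ℝ (fun y => φ y) x (Pi.single j 1) := by
  have hDmeas : MeasurableSet Mᶜ := hMmeas.compl
  have hae : ∀ᵐ x : Fin d → ℝ, x ∈ Mᶜ := measure_eq_zero_iff_ae_notMem.1 hM0
  have hF'meas : Measurable fun x => fderiv ℝ F x (Pi.single j 1) :=
    measurable_fderiv_apply_const ℝ F _
  have hFbound : ∀ᵐ x, |Set.indicator Mᶜ F x| ≤ C * (1 + ‖x‖ ^ N) := by
    filter_upwards [hae] with x hx
    rw [Set.indicator_of_mem hx]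
    exact (le_add_of_nonneg_right (abs_nonneg _)).trans (hgrowth x hx)
  have hF'bound : ∀ᵐ x, |Set.indicator Mᶜ (fun x => fderiv ℝ F x (Pi.single j 1)) x|
      ≤ C * (1 + ‖x‖ ^ N) := by
    filter_upwards [hae] with x hx
    rw [Set.indicator_of_mem hx]
    exact (le_add_of_nonneg_left (abs_nonneg _)).trans (hgrowth x hx)
  have hFsm := (hFmeas.indicator hDmeas).aestronglyMeasurable (μ := volume)
  have hFφ' : Integrable fun x =>
      Set.indicator Mᶜ F x * fderiv ℝ (fun y => φ y) x (Pi.single j 1) := by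
    simpa only [SchwartzMap.lineDerivOp_apply_eq_fderiv] using
      (LineDeriv.lineDerivOp (Pi.single j 1 : Fin d → ℝ) φ).integrable_mul_of_polynomial_growth
        hFsm hFbound
  refine integral_mul_eq_neg_of_ae_hasDerivAt_insertCoord j ?_ ?_
    hFφ'
    (φ.integrable_mul_of_polynomial_growth
      (hF'meas.indicator hDmeas).aestronglyMeasurable hF'bound)
    (φ.integrable_mul_of_polynomial_growth hFsm hFbound)
  · filter_upwards [measure_eq_zero_iff_ae_notMem.1 hproj] with y hy t
    have hline : ∀ s, insertCoord j y s ∈ Mᶜ := fun s hs => hy ⟨s, hs⟩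
    simp only [Set.indicator_of_mem (hline _)]
    exact (hFdiff _ (hline t)).hasFDerivAt.comp_hasDerivAt t (hasDerivAt_insertCoord j y t)
  · exact .of_forall fun y t =>
      φ.differentiableAt.hasFDerivAt.comp_hasDerivAt t (hasDerivAt_insertCoord j y t)
end
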